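/- Let a finitely generated group G split as a graph of groups (a minimal, non-elliptic action without inversions on a simplicial tree T). Let V ≤ G be a vertex group and suppose that every edge group E ≤ V of an edge incident to the corresponding vertex is finitely generated, undistorted in G, and relatively wide in V. Then: (1) V is undistorted in G and (∂_M V, G) = ∂_M V; (2) the natural inclusion ∂_M V → ∂_M G is a topological embedding. -/

import Mathlib

/-!
The key tool is divergence.  A quasi-geodesic ray is Morse iff, at every large scale `r`, two of its
points on either side of a third point `z` cannot be joined by a path of length linear in `r`
avoiding a ball around `z` of radius linear in `r`, and gauge and divergence rate determine each
other (`exists_diverges_of_morse`, `exists_morse_of_diverges`).  One direction shortcuts an avoiding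
path to a quasi-geodesic; the other one builds an avoiding path out of a quasi-geodesic that strays
far from the ray.

The tree supplies a coarse decomposition of `G` around the vertex group `V` (`exists_splitting`): the
complement of `V` is a disjoint union of pieces, one for each edge at the vertex, and a path can
enter or leave a piece only near a left coset of one of finitely many incident edge groups.
Replacing the excursions of a path of `G` into the pieces by jumps inside these cosets
(`Splitting.chain`) costs only a linear factor as soon as the edge groups are undistorted; hence `V`
is finitely generated and undistorted (`Splitting.undistorted`).

Relative wideness of an edge group `E` in `V` says that cut points of the cones of `V` do not
separate points of `E`.  By an ultralimit argument, points of `E` at distance comparable to `r` from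
`z` are joined in `V` by a path of length linear in `r` avoiding a linear ball around `z`
(`RelativelyWide.exists_AP`).  Using such paths for the long excursions, an avoiding path of `G`
between points of `V` is pushed to an avoiding path of `V` (`Splitting.exists_AP`).  So rays of `V`
that diverge in `V` diverge in `G`, with uniform control, and every Morse gauge in `V` gives a Morse
gauge in `G` (`Splitting.exists_morse`).  This is the equality `(∂_M V, G) = ∂_M V`.

For the topology, closed sets of a Morse boundary are tested on pointwise limits, along ultrafilters,
of rays in one stratum.  Morse quasi-geodesic rays are uniformly close to geodesic rays
(`exists_geodesic_close`), so strata of `V` go to strata of `G` and limits to limits, giving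
continuity.  Conversely a ray of `V` asymptotic to an `N`-Morse ray of `G` is Morse in `V` with a
gauge depending only on `N`, so the inclusion is a closed map, and therefore an embedding.
-/

open Set Filter Topology
open scoped ENNReal

namespace MorseGoG

/-! ## Metric notions relative to an explicit distance function

Throughout, distances are given by an explicit function `d : X → X → ℝ`, so that the same
notions apply to metric spaces (`d = dist`), to groups with word metrics, and to subgroups
with their own word metrics. -/

variable {X : Type*}

/-- `γ` is a `C`-quasi-geodesic on the parameter set `I ⊆ ℝ` with respect to `d`:
`C ≥ 1` and `|s−t|/C − C ≤ d (γ s) (γ t) ≤ C|s−t| + C` for all `s, t ∈ I`. -/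
def IsQG (d : X → X → ℝ) (C : ℝ) (I : Set ℝ) (γ : ℝ → X) : Prop :=
  1 ≤ C ∧ ∀ s ∈ I, ∀ t ∈ I,
    |s - t| / C - C ≤ d (γ s) (γ t) ∧ d (γ s) (γ t) ≤ C * |s - t| + C

/-- `x` lies in the (closed) `r`-neighbourhood of `A` with respect to `d`. -/
def InNbhd (d : X → X → ℝ) (A : Set X) (r : ℝ) (x : X) : Prop :=
  ∃ a ∈ A, d x a ≤ r

/-- The set `A` (e.g. the image of a quasi-geodesic) is `N`-Morse with respect to `d`:
every `C`-quasi-geodesic segment with endpoints on `A` is contained in the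
`N C`-neighbourhood of `A`. -/
def MorseSet (d : X → X → ℝ) (N : ℝ → ℝ) (A : Set X) : Prop :=
  ∀ C : ℝ, 1 ≤ C → ∀ a b : ℝ, a ≤ b → ∀ α : ℝ → X,
    IsQG d C (Set.Icc a b) α → α a ∈ A → α b ∈ A →
    ∀ t ∈ Set.Icc a b, InNbhd d A (N C) (α t)

/-- `A` is Morse: it is `N`-Morse for some Morse gauge `N`. -/
def IsMorse (d : X → X → ℝ) (A : Set X) : Prop := ∃ N : ℝ → ℝ, MorseSet d N A

/-- A discrete geodesic ray: the sequence of vertices of a geodesic ray in a graph. -/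
def IsGeodSeq (d : X → X → ℝ) (γ : ℕ → X) : Prop :=
  ∀ m n : ℕ, d (γ m) (γ n) = |(m : ℝ) - (n : ℝ)|

/-- A discrete geodesic segment of length `n`. -/
def IsGeodSeg (d : X → X → ℝ) (n : ℕ) (γ : ℕ → X) : Prop :=
  ∀ i ≤ n, ∀ j ≤ n, d (γ i) (γ j) = |(i : ℝ) - (j : ℝ)|

/-- A discrete `C`-quasi-geodesic ray. -/
def IsQGSeq (d : X → X → ℝ) (C : ℝ) (γ : ℕ → X) : Prop :=
  1 ≤ C ∧ ∀ m n : ℕ,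
    |(m : ℝ) - n| / C - C ≤ d (γ m) (γ n) ∧ d (γ m) (γ n) ≤ C * |(m : ℝ) - n| + C

/-- Two sets are at finite Hausdorff distance with respect to `d`. -/
def BddHD (d : X → X → ℝ) (A B : Set X) : Prop :=
  ∃ r : ℝ, (∀ a ∈ A, InNbhd d B r a) ∧ (∀ b ∈ B, InNbhd d A r b)

/-- A discrete edge path with `n` steps: consecutive points are at distance at most `1`
(i.e. equal or joined by an edge, in a graph whose vertex set carries the metric `d`). -/
def IsEdgePath (d : X → X → ℝ) (n : ℕ) (c : ℕ → X) : Prop :=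
  ∀ i < n, d (c i) (c (i + 1)) ≤ 1

/-- Combinatorial divergence of a discrete ray `γ` in a graph with vertex distance `d`:
the infimum, over `s ≥ r` and over edge paths joining `γ (s - r)` to `γ (s + r)` and
avoiding the ball of radius `ε·r` around `γ s`, of the length of the path. -/
noncomputable def gdivergence (d : X → X → ℝ) (γ : ℕ → X) (r : ℕ) (ε : ℝ) : ℝ≥0∞ :=
  ⨅ (s : ℕ) (_ : r ≤ s) (n : ℕ) (c : ℕ → X) (_ : IsEdgePath d n c)
    (_ : c 0 = γ (s - r)) (_ : c n = γ (s + r))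
    (_ : ∀ i ≤ n, ε * r < d (c i) (γ s)), (n : ℝ≥0∞)

/-! ## Geodesic metric spaces, geodesic rays, divergence -/

variable {Y : Type*} [MetricSpace Y]

/-- A geodesic metric space: any two points are joined by an isometrically parametrised path. -/
def IsGeodesicSpace (Y : Type*) [MetricSpace Y] : Prop :=
  ∀ x y : Y, ∃ γ : ℝ → Y, γ 0 = x ∧ γ (dist x y) = y ∧
    ∀ s ∈ Set.Icc 0 (dist x y), ∀ t ∈ Set.Icc 0 (dist x y), dist (γ s) (γ t) = |s - t|

/-- A geodesic ray (defined on `[0,∞)` and extended constantly to negative times). -/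
def IsGeodRay (γ : ℝ → Y) : Prop :=
  (∀ s t : ℝ, 0 ≤ s → 0 ≤ t → dist (γ s) (γ t) = |s - t|) ∧ ∀ t : ℝ, γ t = γ (max t 0)

theorem IsGeodRay.lipschitz {γ : ℝ → Y} (h : IsGeodRay γ) : LipschitzWith 1 γ := by
  apply LipschitzWith.of_dist_le_mul
  intro s t
  rw [h.2 s, h.2 t, h.1 _ _ (le_max_right s 0) (le_max_right t 0)]
  rw [NNReal.coe_one, one_mul, Real.dist_eq]
  exact abs_max_sub_max_le_abs s t 0

/-- Divergence function `δ_γ(r, ε)` of a quasi-geodesic ray `γ` in a metric space: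
the infimum of lengths (total variations) of paths connecting `γ (s - r)` to `γ (s + r)`
outside the closed ball `B(γ s, εr)`, over all `s ≥ r`. -/
noncomputable def divergence (γ : ℝ → Y) (r ε : ℝ) : ℝ≥0∞ :=
  ⨅ (s : ℝ) (_ : r ≤ s) (c : ℝ → Y) (_ : ContinuousOn c (Set.Icc 0 1))
    (_ : c 0 = γ (s - r)) (_ : c 1 = γ (s + r))
    (_ : ∀ t ∈ Set.Icc (0 : ℝ) 1, ε * r < dist (c t) (γ s)),
    eVariationOn c (Set.Icc 0 1)

/-- Quasi-isometric embedding between sets carrying explicit distance functions. -/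
def IsQIEmb {Z W : Type*} (dZ : Z → Z → ℝ) (dW : W → W → ℝ) (f : Z → W) : Prop :=
  ∃ C : ℝ, 1 ≤ C ∧ ∀ z z' : Z,
    dZ z z' / C - C ≤ dW (f z) (f z') ∧ dW (f z) (f z') ≤ C * dZ z z' + C

/-! ## The Morse boundary of a proper geodesic metric space -/

/-- A Morse geodesic ray based at `p` in the metric space `Y`. -/
structure MRay (Y : Type*) [MetricSpace Y] (p : Y) where
  ray : ℝ → Y
  base : ray 0 = p
  geod : IsGeodRay ray
  morse : IsMorse dist (Set.range ray)

/-- Two rays are identified when they are at finite Hausdorff distance. -/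
def mrayRel (p : Y) (x y : MRay Y p) : Prop :=
  BddHD dist (Set.range x.ray) (Set.range y.ray)

/-- The Morse boundary of a metric space, as a set: Morse geodesic rays based at `p`,
modulo finite Hausdorff distance. -/
def MorseBoundarySp (Y : Type*) [MetricSpace Y] (p : Y) : Type _ := Quot (mrayRel p)

/-- The `N`-Morse stratum: `N`-Morse geodesic rays based at `p`. -/
def NRaysSp (Y : Type*) [MetricSpace Y] (p : Y) (N : ℝ → ℝ) : Type _ :=
  {γ : MRay Y p // MorseSet dist N (Set.range γ.ray)}

/-- Each stratum of rays carries the compact-open topology (as a set of continuous maps). -/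
noncomputable instance NRaysSp.instTop (p : Y) (N : ℝ → ℝ) : TopologicalSpace (NRaysSp Y p N) :=
  TopologicalSpace.induced
    (fun γ => (⟨γ.1.ray, γ.1.geod.lipschitz.continuous⟩ : C(ℝ, Y))) inferInstance

/-- The Morse boundary carries the direct limit topology over all Morse gauges:
a set is open iff its intersection with each stratum `∂_M^N Y_p` is open there. -/
noncomputable instance MorseBoundarySp.instTop (p : Y) :
    TopologicalSpace (MorseBoundarySp Y p) :=
  ⨆ N : ℝ → ℝ,
    TopologicalSpace.coinduced (fun γ : NRaysSp Y p N => Quot.mk (mrayRel p) γ.1) inferInstance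

/-- The relative Morse boundary `(∂_M Y, f)` of a quasi-isometric embedding `f : Y → X`:
classes of Morse rays of `Y` whose image under `f` is Morse in `X`.  It is a subset of
`∂_M Y` (and carries the subspace topology). -/
def relBoundarySp {Y X : Type*} [MetricSpace Y] [MetricSpace X] (p : Y) (f : Y → X) :
    Set (MorseBoundarySp Y p) :=
  {ξ | ∃ γ : MRay Y p, Quot.mk (mrayRel p) γ = ξ ∧ IsMorse dist (f '' Set.range γ.ray)}

/-! ## Word metrics and Morse boundaries of finitely generated groups -/

variable {G : Type*} [Group G]

/-- Word length of `g` with respect to the (symmetrised) alphabet `S`. -/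
noncomputable def wordLength (S : Set G) (g : G) : ℕ :=
  sInf {n : ℕ | ∃ l : List G, l.length = n ∧ (∀ x ∈ l, x ∈ S ∨ x⁻¹ ∈ S) ∧ l.prod = g}

/-- Word metric on `G` with respect to `S`; this is the distance between vertices in the
Cayley graph `Cay(G, S)`. -/
noncomputable def wdist (S : Set G) (g h : G) : ℝ := wordLength S (g⁻¹ * h)

/-- A Morse geodesic ray in the Cayley graph of `(G, S)`, based at the identity,
recorded by its sequence of vertices. -/
structure GRay (G : Type*) [Group G] (S : Set G) where
  seq : ℕ → G
  base : seq 0 = 1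
  geod : IsGeodSeq (wdist S) seq
  morse : IsMorse (wdist S) (Set.range seq)

/-- Identification of rays at finite Hausdorff distance. -/
def grayRel (S : Set G) (x y : GRay G S) : Prop :=
  BddHD (wdist S) (Set.range x.seq) (Set.range y.seq)

/-- The Morse boundary `∂_M G` of the group `G` with finite generating set `S`. -/
def MorseBoundary (G : Type*) [Group G] (S : Set G) : Type _ := Quot (grayRel (G := G) S)

/-- The stratum of `N`-Morse rays. -/
def NGRays (G : Type*) [Group G] (S : Set G) (N : ℝ → ℝ) : Type _ :=
  {γ : GRay G S // MorseSet (wdist S) N (Set.range γ.seq)}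

/-- The compact-open topology on a stratum: for rays in a graph (vertex sequences) this is
the topology of pointwise convergence of the vertex sequences, `G` being discrete. -/
noncomputable instance NGRays.instTop (S : Set G) (N : ℝ → ℝ) :
    TopologicalSpace (NGRays G S N) :=
  TopologicalSpace.induced (fun γ => γ.1.seq)
    (@Pi.topologicalSpace ℕ (fun _ => G) (fun _ => ⊥))

/-- The direct limit topology on the Morse boundary of a group. -/
noncomputable instance MorseBoundary.instTop (S : Set G) :
    TopologicalSpace (MorseBoundary G S) :=
  ⨆ N : ℝ → ℝ,
    TopologicalSpace.coinduced (fun γ : NGRays G S N => Quot.mk (grayRel S) γ.1) inferInstance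

/-! ## Subgroups: undistortion, relative Morse boundaries -/

/-- `H` is finitely generated and undistorted in `(G, S)`: it has a finite generating set
whose word metric is bi-Lipschitz equivalent (suitably, quasi-isometric) to the metric
induced from `G`. -/
def FGUndistorted (S : Set G) (H : Subgroup G) : Prop :=
  ∃ T : Finset H, Subgroup.closure (T : Set H) = ⊤ ∧
    ∃ C : ℝ, 1 ≤ C ∧ ∀ h h' : H,
      wdist (T : Set H) h h' ≤ C * wdist S (h : G) (h' : G) + C ∧
      wdist S (h : G) (h' : G) ≤ C * wdist (T : Set H) h h' + C

/-- The relative Morse boundary of `H` in `G` is empty, `(∂_M H, G) = ∅`: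
no Morse geodesic ray of `H` (w.r.t. any finite generating set of `H`) remains Morse in `G`. -/
def RelMorseEmpty (S : Set G) (H : Subgroup G) : Prop :=
  ∀ T : Finset H, Subgroup.closure (T : Set H) = ⊤ →
    ∀ γ : ℕ → H, IsGeodSeq (wdist (T : Set H)) γ →
      IsMorse (wdist (T : Set H)) (Set.range γ) →
      ¬ IsMorse (wdist S) (Set.range fun n => (γ n : G))

/-- The image of the natural injection `(∂_M H, G) ↪ ∂_M G`: those classes in `∂_M G`
having a representative ray staying at bounded distance from `H`. -/
def relBdryImage (S : Set G) (H : Subgroup G) : Set (MorseBoundary G S) :=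
  {ξ | ∃ γ : GRay G S, Quot.mk (grayRel S) γ = ξ ∧
        ∃ r : ℝ, ∀ n : ℕ, ∃ h ∈ H, wdist S (γ.seq n) h ≤ r}

/-- The relative Morse boundary `(∂_M H, G)` as a subset of `∂_M H` (where `∂_M H` is
formed w.r.t. a generating set `T` of `H`): classes of rays that remain Morse in `G`. -/
def relBdryIn (S : Set G) (H : Subgroup G) (T : Set H) : Set (MorseBoundary H T) :=
  {ξ | ∃ γ : GRay H T, Quot.mk (grayRel T) γ = ξ ∧
        IsMorse (wdist S) (Set.range fun n => (γ.seq n : G))}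

/-- Specification of the natural map `∂_M H → ∂_M G` (or of its restriction to the relative
boundary): each class is sent to the class of a ray of `G` at finite Hausdorff distance
from the image of (a representative of) the given class. -/
def InclSpec (S : Set G) (H : Subgroup G) (TH : Set H)
    (F : MorseBoundary H TH → MorseBoundary G S) : Prop :=
  ∀ γ : GRay H TH, ∀ β : GRay G S,
    Quot.mk (grayRel S) β = F (Quot.mk (grayRel TH) γ) →
    BddHD (wdist S) (Set.range fun n => ((γ.seq n : G))) (Set.range β.seq)

/-! ## Asymptotic cones and relatively wide subgroups -/

/-- Admissible sequences for an asymptotic cone: sequences at bounded rescaled distance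
from the basepoints `o`. -/
def conePts (ω : Ultrafilter ℕ) (d : X → X → ℝ) (o : ℕ → X) (s : ℕ → ℝ) : Set (ℕ → X) :=
  {x | ∃ B : ℝ, ∀ᶠ n in (ω : Filter ℕ), d (o n) (x n) ≤ B * s n}

/-- The pseudo-distance of the asymptotic cone: ultralimit of the rescaled distances. -/
noncomputable def coneDist (ω : Ultrafilter ℕ) (d : X → X → ℝ) (s : ℕ → ℝ)
    (x y : ℕ → X) : ℝ :=
  limUnder (ω : Filter ℕ) (fun n => d (x n) (y n) / s n)

/-- The topology of the asymptotic cone, as a topology on representative sequences: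
generated by the open balls of the cone pseudo-distance. -/
noncomputable def coneTop (ω : Ultrafilter ℕ) (d : X → X → ℝ) (o : ℕ → X) (s : ℕ → ℝ) :
    TopologicalSpace (ℕ → X) :=
  TopologicalSpace.generateFrom
    {U | ∃ c ∈ conePts ω d o s, ∃ ε : ℝ, 0 < ε ∧ U = {x | coneDist ω d s c x < ε}}

/-- `z` is a cut point of the asymptotic cone separating the points `x` and `y`:
`x, y` differ from `z` and do not lie in a common connected subset of the complement
of (the point represented by) `z`. -/
def ConeSeparates (ω : Ultrafilter ℕ) (d : X → X → ℝ) (o : ℕ → X) (s : ℕ → ℝ)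
    (x y z : ℕ → X) : Prop :=
  coneDist ω d s x z ≠ 0 ∧ coneDist ω d s y z ≠ 0 ∧
  ¬ ∃ A : Set (ℕ → X),
      A ⊆ {w ∈ conePts ω d o s | coneDist ω d s w z ≠ 0} ∧ x ∈ A ∧ y ∈ A ∧
      @IsPreconnected (ℕ → X) (coneTop ω d o s) A

/-- `H` is relatively wide in `(G, S)`: in every asymptotic cone of `G` (over a
non-principal ultrafilter, arbitrary basepoints and scaling factors tending to infinity),
no two limit points of `H` are separated by a cut point. -/
def RelativelyWide (S : Set G) (H : Subgroup G) : Prop :=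
  ∀ ω : Ultrafilter ℕ, (ω : Filter ℕ) ≤ Filter.cofinite →
  ∀ (o : ℕ → G) (s : ℕ → ℝ), (∀ n, 0 < s n) → Tendsto s atTop atTop →
  ∀ x y z : ℕ → G, (∀ n, x n ∈ H) → (∀ n, y n ∈ H) →
    x ∈ conePts ω (wdist S) o s → y ∈ conePts ω (wdist S) o s →
    z ∈ conePts ω (wdist S) o s →
    ¬ ConeSeparates ω (wdist S) o s x y z

/-- The subgroup `H ≤ V` is relatively wide in `V` (for any, equivalently some, finite
generating set of `V`). -/
def RelWideIn (V H : Subgroup G) : Prop :=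
  ∀ SV : Finset V, Subgroup.closure (SV : Set V) = ⊤ →
    RelativelyWide (SV : Set V) (H.subgroupOf V)

/-! ## Actions on simplicial trees -/

variable {VT : Type*}

/-- `G` splits as a graph of groups: it acts on the simplicial tree `T`
(preserving adjacency), minimally, non-elliptically and without inversions. -/
def ActsOnTree (G : Type*) [Group G] {VT : Type*} (T : SimpleGraph VT) [MulAction G VT] :
    Prop :=
  T.IsTree ∧
  (∀ (g : G) (a b : VT), T.Adj a b → T.Adj (g • a) (g • b)) ∧
  (∀ (g : G) (a b : VT), T.Adj a b → ¬(g • a = b ∧ g • b = a)) ∧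
  (¬ ∃ v : VT, ∀ g : G, g • v = v) ∧
  (∀ W : Set VT, W.Nonempty → (∀ (g : G), ∀ v ∈ W, g • v ∈ W) →
    (∀ a ∈ W, ∀ b ∈ W, ∀ c : VT, T.dist a c + T.dist c b = T.dist a b → c ∈ W) →
    W = Set.univ)

/-- The stabiliser of the edge `{a, b}` (pointwise; for actions without inversions this is
the full edge stabiliser). -/
def edgeStab (G : Type*) [Group G] {VT : Type*} [MulAction G VT] (a b : VT) : Subgroup G :=
  MulAction.stabilizer G a ⊓ MulAction.stabilizer G b

/-- The halfspace determined by the edge `{a, b}` containing `b`: one of the two connected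
components of the complement of the open edge. -/
def halfspace {VT : Type*} (T : SimpleGraph VT) (a b : VT) : Set VT :=
  {v | T.dist v b < T.dist v a}

end MorseGoG

namespace MorseGoG

variable {G : Type*} [Group G] {VT : Type*}

/-- A choice of "edge subgraphs" `Γ(𝔢) ⊆ Γ` of the Cayley graph `Γ = Cay(G, S)`, one for
each (unoriented) edge of the tree `T`, recorded by its vertex set `A a b ⊆ G`,
satisfying the properties of Lemma 3.2 (`AIS lem`).  Here `p` is the fixed base vertex of
`T` and `f_p(g) = g • p` is the orbit map. -/
structure EdgeSubgraphs (G : Type*) [Group G] (S : Set G) {VT : Type*} (T : SimpleGraph VT)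
    [MulAction G VT] (p : VT) where
  /-- the vertex set of `Γ(𝔢)` for the edge `𝔢 = {a, b}` -/
  A : VT → VT → Set G
  /-- `Γ(𝔢)` only depends on the unoriented edge -/
  symm : ∀ a b : VT, A a b = A b a
  /-- (1) `Γ(𝔢)` is connected -/
  conn : ∀ a b : VT, T.Adj a b → ∀ x ∈ A a b, ∀ y ∈ A a b,
    ∃ (n : ℕ) (c : ℕ → G), IsEdgePath (wdist S) n c ∧ c 0 = x ∧ c n = y ∧
      ∀ i ≤ n, c i ∈ A a b
  /-- (1) `Γ(𝔢)` is `G_𝔢`-invariant -/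
  inva : ∀ a b : VT, T.Adj a b → ∀ g ∈ edgeStab G a b, ∀ x ∈ A a b, g * x ∈ A a b
  /-- (1) `Γ(𝔢)` is `G_𝔢`-cocompact -/
  cocpt : ∀ a b : VT, T.Adj a b →
    ∃ F : Finset G, ∀ x ∈ A a b, ∃ g ∈ edgeStab G a b, ∃ f ∈ F, x = g * f
  /-- (2) equivariance: `Γ(g𝔢) = gΓ(𝔢)` -/
  equivariant : ∀ (g : G) (a b : VT), A (g • a) (g • b) = (fun x => g * x) '' A a b
  /-- (3) `Γ(𝔢)` contains every edge of `Γ` with one endpoint in `f_p⁻¹(𝔥)` and the other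
  in `f_p⁻¹(𝔥*)` -/
  crossing : ∀ a b : VT, T.Adj a b → ∀ x y : G, wdist S x y = 1 →
    x • p ∈ halfspace T a b → y • p ∈ halfspace T b a → x ∈ A a b ∧ y ∈ A a b
  /-- (4) `N(f_p⁻¹(𝔥), r) ∩ N(f_p⁻¹(𝔥*), r) ⊆ N(Γ(𝔢), r)` -/
  nbhd : ∀ a b : VT, T.Adj a b → ∀ r : ℝ, 0 ≤ r → ∀ x : G,
    (∃ y : G, y • p ∈ halfspace T a b ∧ wdist S x y ≤ r) →
    (∃ y : G, y • p ∈ halfspace T b a ∧ wdist S x y ≤ r) →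
    ∃ z ∈ A a b, wdist S x z ≤ r
  /-- (5) each edge of `Γ` lies in `Γ(𝔢)` for only finitely many edges `𝔢` of `T` -/
  finmany : ∀ x y : G, wdist S x y = 1 →
    {e : VT × VT | T.Adj e.1 e.2 ∧ x ∈ A e.1 e.2 ∧ y ∈ A e.1 e.2}.Finite

/-- The vertex set of `Γ(𝔥)` for the halfspace `𝔥` of the edge `{a,b}` containing `b`:
`f_p⁻¹(𝔥) ∖ Γ(𝔢)`. -/
def hsVerts (T : SimpleGraph VT) [MulAction G VT] (p : VT)
    (A : VT → VT → Set G) (a b : VT) : Set G :=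
  {g : G | g • p ∈ halfspace T a b ∧ g ∉ A a b}

/-- `M(𝔥) ⊆ ∂_M G`: classes of rays eventually contained in `Γ(𝔥)`, for the halfspace `𝔥`
of the edge `{a,b}` containing `b`. -/
def Mset (S : Set G) (T : SimpleGraph VT) [MulAction G VT] (p : VT)
    (A : VT → VT → Set G) (a b : VT) : Set (MorseBoundary G S) :=
  {ξ | ∃ γ : GRay G S, Quot.mk (grayRel S) γ = ξ ∧
        ∃ n₀ : ℕ, ∀ n ≥ n₀, γ.seq n ∈ hsVerts T p A a b}

end MorseGoG

namespace MorseGoG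

/-! ### Word metrics -/

section WordMetric

variable {G : Type*} [Group G]

/-- `g` is a product of at most `n` letters from the alphabet `S ∪ S⁻¹`.  Unlike
`wordLength S g ≤ n`, this is meaningful before `S` is known to generate. -/
def WL (S : Set G) (n : ℕ) (g : G) : Prop :=
  ∃ l : List G, l.length ≤ n ∧ (∀ x ∈ l, x ∈ S ∨ x⁻¹ ∈ S) ∧ l.prod = g

theorem WL.mono {S : Set G} {m n : ℕ} {g : G} (h : WL S m g) (hmn : m ≤ n) : WL S n g := by
  obtain ⟨l, hl, h1, h2⟩ := h
  exact ⟨l, hl.trans hmn, h1, h2⟩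

theorem WL.one (S : Set G) (n : ℕ) : WL S n 1 := ⟨[], by simp, by simp, by simp⟩

theorem WL.of_mem {S : Set G} {g : G} (h : g ∈ S) : WL S 1 g := ⟨[g], by simp, by simp [h], by simp⟩

theorem WL.mul {S : Set G} {m n : ℕ} {g h : G} (hg : WL S m g) (hh : WL S n h) :
    WL S (m + n) (g * h) := by
  obtain ⟨l, hl, h1, h2⟩ := hg
  obtain ⟨l', hl', h1', h2'⟩ := hh
  refine ⟨l ++ l', by simp; omega, ?_, by simp [h2, h2']⟩
  intro x hx
  rcases List.mem_append.1 hx with hx | hx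
  · exact h1 x hx
  · exact h1' x hx

theorem WL.inv {S : Set G} {m : ℕ} {g : G} (hg : WL S m g) : WL S m g⁻¹ := by
  obtain ⟨l, hl, h1, h2⟩ := hg
  refine ⟨(l.map (·⁻¹)).reverse, by simpa using hl, ?_, by rw [← h2, List.prod_inv_reverse]⟩
  intro x hx
  simp only [List.mem_reverse, List.mem_map] at hx
  obtain ⟨y, hy, rfl⟩ := hx
  rw [inv_inv]
  exact (h1 y hy).symm

theorem WL.mem_closure {S : Set G} {m : ℕ} {g : G} (hg : WL S m g) : g ∈ Subgroup.closure S := by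
  obtain ⟨l, hl, h1, h2⟩ := hg
  rw [← h2]
  refine Subgroup.list_prod_mem _ fun x hx => ?_
  rcases h1 x hx with h | h
  · exact Subgroup.subset_closure h
  · exact (Subgroup.inv_mem_iff _).1 (Subgroup.subset_closure h)

theorem WL.wordLength_le {S : Set G} {m : ℕ} {g : G} (hg : WL S m g) : wordLength S g ≤ m := by
  obtain ⟨l, hl, h1, h2⟩ := hg
  have : l.length ∈ {n : ℕ | ∃ l : List G, l.length = n ∧
    (∀ x ∈ l, x ∈ S ∨ x⁻¹ ∈ S) ∧ l.prod = g} := ⟨l, rfl, h1, h2⟩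
  exact (Nat.sInf_le this).trans hl

theorem exists_list_wordLength {S : Set G} (hS : Subgroup.closure S = ⊤) (g : G) :
    ∃ l : List G, l.length = wordLength S g ∧ (∀ x ∈ l, x ∈ S ∨ x⁻¹ ∈ S) ∧ l.prod = g := by
  have hg : g ∈ Subgroup.closure S := by rw [hS]; trivial
  rw [← Subgroup.mem_toSubmonoid, Subgroup.closure_toSubmonoid] at hg
  obtain ⟨l, hl, hp⟩ := Submonoid.exists_list_of_mem_closure hg
  exact Nat.sInf_mem (s := {n : ℕ | ∃ l : List G, l.length = n ∧
    (∀ x ∈ l, x ∈ S ∨ x⁻¹ ∈ S) ∧ l.prod = g}) ⟨l.length, l, rfl, hl, hp⟩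

theorem wl_wordLength {S : Set G} (hS : Subgroup.closure S = ⊤) (g : G) :
    WL S (wordLength S g) g := by
  obtain ⟨l, h0, h1, h2⟩ := exists_list_wordLength hS g
  exact ⟨l, h0.le, h1, h2⟩

theorem wl_iff {S : Set G} (hS : Subgroup.closure S = ⊤) (g : G) (n : ℕ) :
    WL S n g ↔ wordLength S g ≤ n :=
  ⟨WL.wordLength_le, fun h => (wl_wordLength hS g).mono h⟩

theorem WL.finite {S : Set G} (hS : S.Finite) (n : ℕ) : {g : G | WL S n g}.Finite := by
  have hA : (S ∪ S⁻¹).Finite := hS.union hS.inv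
  have : Finite (S ∪ S⁻¹ : Set G) := hA
  refine ((List.finite_length_le (S ∪ S⁻¹ : Set G) n).image
    (fun l => (l.map Subtype.val).prod)).subset ?_
  rintro g ⟨l, h0, h1, h2⟩
  lift l to List (S ∪ S⁻¹ : Set G) using h1
  exact ⟨l, by simpa using h0, h2⟩

/-- A homomorphism sending each letter to an element of length at most `k` is `k`-Lipschitz. -/
theorem WL.map {H : Type*} [Group H] {T : Set H} {S : Set G} (f : H →* G) {k : ℕ}
    (hf : ∀ t ∈ T, WL S k (f t)) {n : ℕ} {h : H} (hh : WL T n h) : WL S (k * n) (f h) := by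
  obtain ⟨l, h0, h1, h2⟩ := hh
  refine WL.mono (m := k * l.length) ?_ (Nat.mul_le_mul_left k h0)
  clear h0
  subst h2
  induction l with
  | nil => simpa using WL.one S 0
  | cons a l ih =>
    rw [List.prod_cons, map_mul, List.length_cons, Nat.mul_succ, add_comm]
    refine WL.mul ?_ (ih fun x hx => h1 x (List.mem_cons_of_mem _ hx))
    rcases h1 a (by simp) with h | h
    · exact hf a h
    · simpa using (hf _ h).inv

end WordMetric

/-! ### Graph metrics -/

/-- `d` is the distance between the vertices of a connected graph: an integer-valued
pseudo-metric in which any two points are joined by a discrete geodesic. -/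
structure GraphMetric {X : Type*} (d : X → X → ℝ) : Prop where
  self : ∀ x, d x x = 0
  symm : ∀ x y, d x y = d y x
  tri : ∀ x y z, d x z ≤ d x y + d y z
  geod : ∀ x y, ∃ n : ℕ, d x y = n ∧ ∃ c : ℕ → X, c 0 = x ∧ c n = y ∧ IsGeodSeg d n c

theorem GraphMetric.nonneg {X : Type*} {d : X → X → ℝ} (hd : GraphMetric d) (x y : X) :
    0 ≤ d x y := by
  obtain ⟨n, hn, -⟩ := hd.geod x y
  rw [hn]; positivity

section

variable {G : Type*} [Group G]

theorem wdist_le_iff {S : Set G} (hS : Subgroup.closure S = ⊤) (x y : G) (n : ℕ) :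
    wdist S x y ≤ n ↔ WL S n (x⁻¹ * y) := by
  rw [wl_iff hS, wdist, Nat.cast_le]

theorem wdist_mul_left (S : Set G) (g x y : G) : wdist S (g * x) (g * y) = wdist S x y := by
  simp [wdist, mul_assoc]

theorem graphMetric_wdist {S : Set G} (hS : Subgroup.closure S = ⊤) : GraphMetric (wdist S) := by
  have hself : ∀ x, wdist S x x = 0 := fun x => by
    have := (WL.one S 0).wordLength_le
    simp only [wdist, inv_mul_cancel, Nat.cast_eq_zero]; omega
  have hsymm' : ∀ x y, wdist S x y ≤ wdist S y x := fun x y => by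
    have := (wl_wordLength hS (y⁻¹ * x)).inv.wordLength_le
    simp only [mul_inv_rev, inv_inv] at this
    simpa [wdist] using this
  have hsymm : ∀ x y, wdist S x y = wdist S y x := fun x y => le_antisymm (hsymm' _ _) (hsymm' _ _)
  have htri : ∀ x y z, wdist S x z ≤ wdist S x y + wdist S y z := fun x y z => by
    have := ((wl_wordLength hS (x⁻¹ * y)).mul (wl_wordLength hS (y⁻¹ * z))).wordLength_le
    rw [show x⁻¹ * y * (y⁻¹ * z) = x⁻¹ * z by group] at this
    simp only [wdist]
    exact_mod_cast this
  refine ⟨hself, hsymm, htri, fun x y => ⟨wordLength S (x⁻¹ * y), rfl, ?_⟩⟩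
  obtain ⟨l, h0, h1, h2⟩ := exists_list_wordLength hS (x⁻¹ * y)
  have key : ∀ i j, i ≤ j → j ≤ l.length →
      wdist S (x * (l.take i).prod) (x * (l.take j).prod) ≤ (j : ℝ) - i := by
    intro i j hij hj
    rw [wdist_mul_left, ← Nat.cast_sub hij, wdist_le_iff hS]
    refine ⟨(l.drop i).take (j - i), by simp,
      fun a ha => h1 a (List.mem_of_mem_drop (List.mem_of_mem_take ha)), ?_⟩
    have : l.take j = l.take i ++ (l.drop i).take (j - i) := by
      conv_lhs => rw [show j = i + (j - i) by omega]
      exact List.take_add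
    rw [this, List.prod_append]; group
  have key2 : ∀ i j, i ≤ j → j ≤ l.length →
      wdist S (x * (l.take i).prod) (x * (l.take j).prod) = (j : ℝ) - i := by
    intro i j hij hj
    refine le_antisymm (key i j hij hj) ?_
    have a1 := key 0 i (by omega) (by omega)
    have a2 := key j l.length hj le_rfl
    have a3 := htri (x * (l.take 0).prod) (x * (l.take i).prod) (x * (l.take l.length).prod)
    have a4 := htri (x * (l.take i).prod) (x * (l.take j).prod) (x * (l.take l.length).prod)
    have a5 : wdist S (x * (l.take 0).prod) (x * (l.take l.length).prod) = l.length := by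
      rw [List.take_length, h2, h0]; simp [wdist]
    push_cast at a1
    linarith
  refine ⟨fun i => x * (l.take i).prod, by simp, by simp only [← h0, List.take_length, h2]; group, ?_⟩
  intro i hi j hj
  rw [← h0] at hi hj
  rcases le_total i j with hij | hij
  · rw [key2 i j hij hj, abs_sub_comm, abs_of_nonneg]
    have : (i : ℝ) ≤ j := by exact_mod_cast hij
    linarith
  · rw [hsymm, key2 j i hij hi, abs_of_nonneg]
    have : (j : ℝ) ≤ i := by exact_mod_cast hij
    linarith

theorem wdist_ball_finite {S : Set G} (hS : Subgroup.closure S = ⊤) (hfin : S.Finite) (x : G)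
    (n : ℕ) : {y | wdist S x y ≤ n}.Finite := by
  refine ((WL.finite hfin n).image (fun g => x * g)).subset ?_
  intro y hy
  exact ⟨x⁻¹ * y, (wdist_le_iff hS x y n).1 hy, by simp⟩

end

/-! ### Paths avoiding a ball -/

/-- `AvoidPath d z ρ n x y`: there is an edge path with exactly `n` steps from `x` to `y`
all of whose points lie at distance at least `ρ` from `z`. -/
inductive AvoidPath {X : Type*} (d : X → X → ℝ) (z : X) (ρ : ℝ) : ℕ → X → X → Prop
  | refl (x : X) : ρ ≤ d x z → AvoidPath d z ρ 0 x x
  | step {n : ℕ} {x y w : X} :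
      AvoidPath d z ρ n x y → d y w ≤ 1 → ρ ≤ d w z → AvoidPath d z ρ (n + 1) x w

section AvoidPath

variable {X : Type*} {d : X → X → ℝ} {z : X} {ρ : ℝ}

theorem AvoidPath.mono {n : ℕ} {x y : X} {ρ' : ℝ} (h : AvoidPath d z ρ n x y) (hρ : ρ' ≤ ρ) :
    AvoidPath d z ρ' n x y := by
  induction h with
  | refl x hx => exact .refl x (hρ.trans hx)
  | step _ h1 h2 ih => exact ih.step h1 (hρ.trans h2)

theorem AvoidPath.trans {m n : ℕ} {x y w : X} (h : AvoidPath d z ρ m x y)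
    (h' : AvoidPath d z ρ n y w) : AvoidPath d z ρ (m + n) x w := by
  induction h' with
  | refl x hx => exact h
  | step _ h1 h2 ih => exact (ih h).step h1 h2

theorem AvoidPath.left {n : ℕ} {x y : X} (h : AvoidPath d z ρ n x y) : ρ ≤ d x z := by
  induction h with
  | refl x hx => exact hx
  | step _ h1 h2 ih => exact ih

theorem AvoidPath.right {n : ℕ} {x y : X} (h : AvoidPath d z ρ n x y) : ρ ≤ d y z := by
  cases h with
  | refl _ hx => exact hx
  | step _ h1 h2 => exact h2

theorem AvoidPath.symm (hd : GraphMetric d) {n : ℕ} {x y : X} (h : AvoidPath d z ρ n x y) :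
    AvoidPath d z ρ n y x := by
  induction h with
  | refl x hx => exact .refl x hx
  | @step n x y w h h1 h2 ih =>
    have := (AvoidPath.step (AvoidPath.refl w h2) (by rwa [hd.symm]) h.right).trans ih
    rwa [zero_add, add_comm] at this

theorem AvoidPath.exists_fun {n : ℕ} {x y : X} (h : AvoidPath d z ρ n x y) :
    ∃ c : ℕ → X, c 0 = x ∧ c n = y ∧ IsEdgePath d n c ∧ ∀ i ≤ n, ρ ≤ d (c i) z := by
  induction h with
  | refl x hx => exact ⟨fun _ => x, rfl, rfl, fun i hi => absurd hi (by omega), fun _ _ => hx⟩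
  | @step n x y w h h1 h2 ih =>
    obtain ⟨c, h0, hn, he, ha⟩ := ih
    refine ⟨fun i => if i ≤ n then c i else w, by simp [h0], by simp, ?_, ?_⟩
    · intro i hi
      rcases Nat.lt_or_ge i n with hin | hin
      · simp only [hin.le, Nat.succ_le_of_lt hin, if_true]; exact he i hin
      · have : i = n := by omega
        subst this; simpa [hn] using h1
    · intro i hi
      by_cases hin : i ≤ n
      · simpa [hin] using ha i hin
      · simpa [hin] using h2

theorem AvoidPath.of_fun {c : ℕ → X} {i j : ℕ} (hij : i ≤ j)
    (he : ∀ k, i ≤ k → k < j → d (c k) (c (k + 1)) ≤ 1)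
    (ha : ∀ k, i ≤ k → k ≤ j → ρ ≤ d (c k) z) : AvoidPath d z ρ (j - i) (c i) (c j) := by
  induction j, hij using Nat.le_induction with
  | base => simpa using AvoidPath.refl (c i) (ha i le_rfl le_rfl)
  | succ j hij ih =>
    rw [Nat.succ_sub hij]
    exact (ih (fun k h1 h2 => he k h1 (by omega)) (fun k h1 h2 => ha k h1 (by omega))).step
      (he j hij (by omega)) (ha _ (by omega) le_rfl)

/-- A geodesic from `x` to `y` stays at distance at least `d x z - d x y` from `z`. -/
theorem AvoidPath.geodesic (hd : GraphMetric d) (x y : X) {n : ℕ} (hn : d x y = n)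
    (h : ρ ≤ d x z - d x y) : AvoidPath d z ρ n x y := by
  obtain ⟨m, hm, c, h0, h1, hc⟩ := hd.geod x y
  have hmn : m = n := by exact_mod_cast hm.symm.trans hn
  subst hmn
  have := AvoidPath.of_fun (d := d) (z := z) (ρ := ρ) (c := c) (Nat.zero_le m) ?_ ?_
  · rwa [h0, h1] at this
  · intro k _ hk
    rw [hc k (by omega) (k + 1) (by omega)]
    push_cast; simp
  · intro k _ hk
    have h2 := hd.tri x (c k) z
    have h3 : d x (c k) ≤ m := by
      rw [← h0, hc 0 (by omega) k hk]
      have : (k : ℝ) ≤ m := by exact_mod_cast hk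
      simpa using this
    linarith

/-- Avoiding paths at scale `r`: an edge path of length at most `M r` from `x` to `y` which
stays at distance at least `r / M` from `z`. -/
def AP (d : X → X → ℝ) (M r : ℝ) (x y z : X) : Prop :=
  ∃ n : ℕ, (n : ℝ) ≤ M * r ∧ AvoidPath d z (r / M) n x y

theorem AP.mono {M M' r : ℝ} {x y : X} (h : AP d M r x y z) (hM : 0 < M) (hMM : M ≤ M')
    (hr : 0 ≤ r) : AP d M' r x y z := by
  obtain ⟨n, hn, h⟩ := h
  refine ⟨n, hn.trans (by gcongr), h.mono (by gcongr)⟩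

theorem AP.trans {M M' r : ℝ} {x y w : X} (h : AP d M r x y z) (h' : AP d M' r y w z)
    (hM : 0 < M) (hM' : 0 < M') (hr : 0 ≤ r) : AP d (M + M') r x w z := by
  obtain ⟨n, hn, h⟩ := h
  obtain ⟨n', hn', h'⟩ := h'
  refine ⟨n + n', by push_cast; nlinarith, (h.mono ?_).trans (h'.mono ?_)⟩
  · gcongr; linarith
  · gcongr; linarith

theorem AP.symm (hd : GraphMetric d) {M r : ℝ} {x y : X} (h : AP d M r x y z) :
    AP d M r y x z := by
  obtain ⟨n, hn, h⟩ := h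
  exact ⟨n, hn, h.symm hd⟩

theorem AP.geodesic (hd : GraphMetric d) {M r : ℝ} {x y : X} (h1 : d x y ≤ M * r)
    (h2 : r / M ≤ d x z - d x y) : AP d M r x y z := by
  obtain ⟨n, hn, -⟩ := hd.geod x y
  exact ⟨n, by rwa [← hn], AvoidPath.geodesic hd x y hn h2⟩

end AvoidPath

/-! ### Discrete quasi-geodesics -/

section Discrete

variable {X : Type*} {d : X → X → ℝ}

/-- The sequence `Q` satisfies the `C`-quasi-geodesic inequalities on the index set `I`. -/
def QGOn (d : X → X → ℝ) (C : ℝ) (I : Set ℕ) (Q : ℕ → X) : Prop :=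
  ∀ i ∈ I, ∀ j ∈ I, |(i : ℝ) - j| / C - C ≤ d (Q i) (Q j) ∧ d (Q i) (Q j) ≤ C * |(i : ℝ) - j| + C

theorem QGOn.of_geodSeg {n : ℕ} {Q : ℕ → X} (h : IsGeodSeg d n Q) : QGOn d 1 (Iic n) Q := by
  intro i hi j hj
  rw [h i hi j hj]
  constructor <;> linarith

theorem QGOn.of_le (hd : GraphMetric d) {C : ℝ} {I : Set ℕ} {Q : ℕ → X}
    (h : ∀ i ∈ I, ∀ j ∈ I, i ≤ j →
      ((j : ℝ) - i) / C - C ≤ d (Q i) (Q j) ∧ d (Q i) (Q j) ≤ C * ((j : ℝ) - i) + C) :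
    QGOn d C I Q := by
  intro i hi j hj
  rcases le_total i j with hij | hij
  · have h1 : (i : ℝ) ≤ j := by exact_mod_cast hij
    rw [abs_sub_comm, abs_of_nonneg (by linarith)]
    exact h i hi j hj hij
  · have h1 : (j : ℝ) ≤ i := by exact_mod_cast hij
    rw [abs_of_nonneg (by linarith), hd.symm]
    exact h j hj i hi hij

theorem QGOn.le_mul {C : ℝ} (hC : 1 ≤ C) {I : Set ℕ} {Q : ℕ → X} (h : QGOn d C I Q) {i j : ℕ}
    (hi : i ∈ I) (hj : j ∈ I) : |(i : ℝ) - j| ≤ C * (d (Q i) (Q j) + C) := by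
  have h1 := (h i hi j hj).1
  have h2 : |(i : ℝ) - j| / C ≤ d (Q i) (Q j) + C := by linarith
  rwa [div_le_iff₀ (by linarith), mul_comm] at h2

/-- A discrete quasi-geodesic, made into a map on a real interval by rounding down. -/
theorem QGOn.isQG_floor {C : ℝ} (hC : 1 ≤ C) {n : ℕ} {Q : ℕ → X} (h : QGOn d C (Iic n) Q) :
    IsQG d (2 * C) (Icc 0 (n : ℝ)) (fun s => Q ⌊s⌋₊) := by
  refine ⟨by linarith, fun s hs t ht => ?_⟩
  have f1 := Nat.floor_le hs.1
  have f2 := Nat.lt_floor_add_one s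
  have f3 := Nat.floor_le ht.1
  have f4 := Nat.lt_floor_add_one t
  have hs' : ⌊s⌋₊ ≤ n := Nat.floor_le_of_le hs.2
  have ht' : ⌊t⌋₊ ≤ n := Nat.floor_le_of_le ht.2
  obtain ⟨h1, h2⟩ := h _ hs' _ ht'
  have a1 : |s - t| ≤ |(⌊s⌋₊ : ℝ) - ⌊t⌋₊| + 1 := by grind
  have a2 : |(⌊s⌋₊ : ℝ) - ⌊t⌋₊| ≤ |s - t| + 1 := by grind
  constructor
  · have hpos : 0 < C := by linarith
    have : |s - t| / (2 * C) ≤ |(⌊s⌋₊ : ℝ) - ⌊t⌋₊| / C + 1 := by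
      calc |s - t| / (2 * C) ≤ (|(⌊s⌋₊ : ℝ) - ⌊t⌋₊| + 1) / C := by
            rw [div_le_div_iff₀ (by positivity) hpos]
            nlinarith [abs_nonneg ((⌊s⌋₊ : ℝ) - ⌊t⌋₊)]
        _ ≤ _ := by
            rw [add_div]
            have : 1 / C ≤ 1 := by rw [div_le_one hpos]; exact hC
            linarith
    linarith
  · nlinarith [abs_nonneg (s - t)]

theorem MorseSet.discrete {N : ℝ → ℝ} {A : Set X} (hA : MorseSet d N A) {C : ℝ} (hC : 1 ≤ C)
    {n : ℕ} {Q : ℕ → X} (h : QGOn d C (Iic n) Q) (h0 : Q 0 ∈ A) (hn : Q n ∈ A) {i : ℕ}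
    (hi : i ≤ n) : InNbhd d A (N (2 * C)) (Q i) := by
  have := hA (2 * C) (by linarith) 0 n (by positivity) _ (h.isQG_floor hC) (by simpa using h0)
    (by simpa using hn) i ⟨by positivity, by exact_mod_cast hi⟩
  simpa using this

/-- It suffices to test the Morse property on discrete quasi-geodesics: sample a given
quasi-geodesic on `[a, b]` at the times `min (a + i) b`. -/
theorem MorseSet.of_discrete (hd : GraphMetric d) {D : ℝ → ℝ} {A : Set X}
    (h : ∀ C, 1 ≤ C → ∀ (n : ℕ) (Q : ℕ → X), QGOn d C (Iic n) Q → Q 0 ∈ A → Q n ∈ A →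
      ∀ i ≤ n, InNbhd d A (D C) (Q i)) :
    MorseSet d (fun C => D (2 * C) + 2 * C) A := by
  intro C hC a b hab α hα ha hb t ht
  set u : ℕ → ℝ := fun i => min (a + i) b with hu
  have huI : ∀ i, u i ∈ Icc a b := fun i =>
    ⟨le_min (by linarith [(Nat.cast_nonneg i : (0:ℝ) ≤ i)]) hab, min_le_right _ _⟩
  have hn := Nat.le_ceil (b - a)
  have hn' := Nat.ceil_lt_add_one (show 0 ≤ b - a by linarith)
  set n := ⌈b - a⌉₊
  have hQ : QGOn d (2 * C) (Iic n) (fun i => α (u i)) := by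
    refine QGOn.of_le hd fun i hi j hj hij => ?_
    have hj' : (j : ℝ) ≤ n := by exact_mod_cast hj
    have hij' : (i : ℝ) ≤ j := by exact_mod_cast hij
    obtain ⟨h1, h2⟩ := hα.2 _ (huI i) _ (huI j)
    have hi' : u i ≤ u j := min_le_min (by linarith) le_rfl
    have a1 : |u i - u j| ≤ (j : ℝ) - i := by
      rw [abs_sub_comm, abs_of_nonneg (by linarith)]
      simp only [hu]; grind
    have a2 : (j : ℝ) - i ≤ |u i - u j| + 1 := by
      rw [abs_sub_comm, abs_of_nonneg (by linarith)]
      simp only [hu]; grind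
    have hpos : 0 < C := by linarith
    constructor
    · have : ((j : ℝ) - i) / (2 * C) ≤ |u i - u j| / C + 1 := by
        calc ((j : ℝ) - i) / (2 * C) ≤ (|u i - u j| + 1) / C := by
              rw [div_le_div_iff₀ (by positivity) hpos]
              nlinarith [abs_nonneg (u i - u j)]
          _ ≤ _ := by
              rw [add_div]
              have : 1 / C ≤ 1 := by rw [div_le_one hpos]; exact hC
              linarith
      linarith
    · nlinarith
  have e0 : u 0 = a := by simp [hu, hab]
  have en : u n = b := by simp only [hu]; exact min_eq_right (by linarith)
  have hta : 0 ≤ t - a := by linarith [ht.1]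
  have f1 := Nat.floor_le hta
  have f2 := Nat.lt_floor_add_one (t - a)
  have hi : ⌊t - a⌋₊ ≤ n := by
    have : (⌊t - a⌋₊ : ℝ) ≤ n := by linarith [ht.2]
    exact_mod_cast this
  obtain ⟨y, hy, hyd⟩ := h (2 * C) (by linarith) n _ hQ (by simpa [e0] using ha)
    (by simpa [en] using hb) _ hi
  refine ⟨y, hy, ?_⟩
  have e1 : u ⌊t - a⌋₊ = a + ⌊t - a⌋₊ := min_eq_left (by linarith [ht.2])
  have h3 := (hα.2 t ht _ (huI ⌊t - a⌋₊)).2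
  have h4 : |t - u ⌊t - a⌋₊| ≤ 1 := by rw [e1, abs_le]; constructor <;> linarith
  have h5 := hd.tri (α t) (α (u ⌊t - a⌋₊)) y
  nlinarith

/-- If a coarsely connected path `P` starts and ends near `Q t₁` and `Q t₂` and stays near the
quasi-geodesic `Q`, then it passes near each intermediate point `Q t`. -/
theorem exists_near_of_crossing (hd : GraphMetric d) {C D J : ℝ} (hC : 1 ≤ C) (hJ : 0 ≤ J)
    {I : Set ℕ} {P Q : ℕ → X} (hQ : QGOn d C I Q) {n : ℕ}
    (hP : ∀ i < n, d (P i) (P (i + 1)) ≤ J) (hPQ : ∀ i ≤ n, ∃ j ∈ I, d (P i) (Q j) ≤ D)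
    {t₁ t t₂ : ℕ} (h1 : t₁ ∈ I) (ht : t ∈ I) (h2 : t₂ ∈ I) (h1t : t₁ ≤ t) (ht2 : t ≤ t₂)
    (hP0 : d (P 0) (Q t₁) ≤ D) (hPn : d (P n) (Q t₂) ≤ D) :
    ∃ i ≤ n, d (P i) (Q t) ≤ D + C * (C * (2 * D + J + C)) + C := by
  have close : ∀ i j j', j ∈ I → j' ∈ I → j ≤ t → t ≤ j' → d (P i) (Q j) ≤ D →
      d (Q j) (Q j') ≤ 2 * D + J → d (P i) (Q t) ≤ D + C * (C * (2 * D + J + C)) + C := by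
    intro i j j' hj hj' hjt htj' hij hjj
    have b1 : (j : ℝ) ≤ t := by exact_mod_cast hjt
    have b2 : (t : ℝ) ≤ j' := by exact_mod_cast htj'
    have a1 := hQ.le_mul hC hj hj'
    rw [abs_sub_comm, abs_of_nonneg (by linarith)] at a1
    have a2 := (hQ j hj t ht).2
    rw [abs_sub_comm, abs_of_nonneg (by linarith)] at a2
    have a3 : (t : ℝ) - j ≤ C * (2 * D + J + C) := by
      refine le_trans (by linarith) (a1.trans ?_)
      gcongr
    have a4 : C * ((t : ℝ) - j) ≤ C * (C * (2 * D + J + C)) := by gcongr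
    linarith [hd.tri (P i) (Q j) (Q t)]
  by_cases hn : ∃ j ∈ I, j ≤ t ∧ d (P n) (Q j) ≤ D
  · obtain ⟨j, hj, hjt, hjd⟩ := hn
    refine ⟨n, le_rfl, close n j t₂ hj h2 hjt ht2 hjd ?_⟩
    linarith [hd.tri (Q j) (P n) (Q t₂), hd.symm (Q j) (P n)]
  · have : ∃ i < n, (∃ j ∈ I, j ≤ t ∧ d (P i) (Q j) ≤ D) ∧
        ¬ ∃ j ∈ I, j ≤ t ∧ d (P (i + 1)) (Q j) ≤ D := by
      by_contra hcon
      push Not at hcon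
      have key : ∀ i ≤ n, ∃ j ∈ I, j ≤ t ∧ d (P i) (Q j) ≤ D := by
        intro i
        induction i with
        | zero => exact fun _ => ⟨t₁, h1, h1t, hP0⟩
        | succ i ih => exact fun hi => hcon i (by omega) (ih (by omega))
      exact hn (key n le_rfl)
    obtain ⟨i, hi, ⟨j, hj, hjt, hjd⟩, hnot⟩ := this
    obtain ⟨j', hj', hjd'⟩ := hPQ (i + 1) hi
    have htj' : t ≤ j' := by
      by_contra hlt
      exact hnot ⟨j', hj', by omega, hjd'⟩
    refine ⟨i, hi.le, close i j j' hj hj' hjt htj' hjd ?_⟩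
    linarith [hd.tri (Q j) (P i) (Q j'), hd.tri (P i) (P (i + 1)) (Q j'), hd.symm (Q j) (P i),
      hP i hi]

/-! ### Divergence of Morse quasi-geodesics -/

/-- `γ` has superlinear divergence with rate `R`: for each `M` and each scale `r ≥ R M`, two
points of `γ` at parameter distance at least `r / M` on either side of `γ t` are not joined by a
path of length at most `M r` that stays at distance at least `r / M` from `γ t`. -/
def Diverges (d : X → X → ℝ) (R : ℕ → ℝ) (γ : ℕ → X) : Prop :=
  ∀ (M : ℕ) (r : ℝ), R M ≤ r → ∀ t₁ t t₂ : ℕ, t₁ ≤ t → t ≤ t₂ →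
    r ≤ M * ((t : ℝ) - t₁) → r ≤ M * ((t₂ : ℝ) - t) → ¬ AP d M r (γ t₁) (γ t₂) (γ t)

/-- Shortcutting: a path of `n₀` steps avoiding the ball of radius `ρ` can be replaced by a
quasi-geodesic avoiding a slightly smaller ball.  Among all paths with `n` steps at distance at
least `ρ - (n₀ - n) / K` from `z`, one with `n` minimal is quasi-geodesic: a shortcut of length `e`
of a subpath longer than `(K + 1) e` lowers `n` by at least `K e`, and moves points by at
most `e`. -/
theorem exists_qg_of_avoidPath (hd : GraphMetric d) {K : ℝ} (hK : 1 ≤ K) {z x y : X} {ρ : ℝ}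
    {n₀ : ℕ} (h : AvoidPath d z ρ n₀ x y) :
    ∃ (n : ℕ) (c : ℕ → X), c 0 = x ∧ c n = y ∧ IsEdgePath d n c ∧
      QGOn d (K + 1) (Iic n) c ∧ ∀ i ≤ n, ρ - n₀ / K ≤ d (c i) z := by
  classical
  have hex : ∃ n : ℕ, n ≤ n₀ ∧ AvoidPath d z (ρ - ((n₀ : ℝ) - n) / K) n x y :=
    ⟨n₀, le_rfl, by simpa using h⟩
  obtain ⟨hn, hP⟩ := Nat.find_spec hex
  have hmin : ∀ m < Nat.find hex, ¬ (m ≤ n₀ ∧ AvoidPath d z (ρ - ((n₀ : ℝ) - m) / K) m x y) :=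
    fun m hm => Nat.find_min hex hm
  generalize Nat.find hex = n at *
  have hK0 : 0 < K := by linarith
  obtain ⟨c, h0, h1, he, ha⟩ := hP.exists_fun
  have hlen : ∀ i j, i ≤ j → j ≤ n → d (c i) (c j) ≤ (j : ℝ) - i := by
    intro i j hij
    induction j, hij using Nat.le_induction with
    | base => intro _; simp [hd.self]
    | succ j hij ih =>
      intro hj
      push_cast
      linarith [ih (by omega), he j (by omega), hd.tri (c i) (c j) (c (j + 1))]
  refine ⟨n, c, h0, h1, he, QGOn.of_le hd fun i hi j hj hij => ?_, fun i hi => ?_⟩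
  · have hj : j ≤ n := hj
    have hij' : (i : ℝ) ≤ j := by exact_mod_cast hij
    have hl := hlen i j hij hj
    refine ⟨?_, by nlinarith⟩
    suffices hs : (j : ℝ) - i ≤ (K + 1) * d (c i) (c j) by
      have : ((j : ℝ) - i) / (K + 1) ≤ d (c i) (c j) := by
        rw [div_le_iff₀ (by linarith)]; linarith
      linarith
    by_contra hcon
    push Not at hcon
    obtain ⟨e, hed, -⟩ := hd.geod (c i) (c j)
    rw [hed] at hcon hl
    have hlt : (K + 1) * e < (j : ℝ) - i := hcon
    have hei : e < j - i := by
      have : (e : ℝ) < ((j - i : ℕ) : ℝ) := by rw [Nat.cast_sub hij]; nlinarith [(Nat.cast_nonneg e : (0:ℝ) ≤ e)]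
      exact_mod_cast this
    have hm : i + e + (n - j) < n := by omega
    apply hmin _ hm
    refine ⟨by omega, ?_⟩
    have hcast : ((i + e + (n - j) : ℕ) : ℝ) = i + e + (n - j) := by
      push_cast [Nat.cast_sub hj]; ring
    have hρ : ρ - ((n₀ : ℝ) - ((i + e + (n - j) : ℕ) : ℝ)) / K ≤ ρ - ((n₀ : ℝ) - n) / K - e := by
      have : ((n₀ : ℝ) - n) / K + e ≤ ((n₀ : ℝ) - ((i + e + (n - j) : ℕ) : ℝ)) / K := by
        rw [hcast, div_add' _ _ _ hK0.ne']
        gcongr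
        nlinarith
      linarith
    have hρ' : ρ - ((n₀ : ℝ) - ((i + e + (n - j) : ℕ) : ℝ)) / K ≤ ρ - ((n₀ : ℝ) - n) / K := by
      linarith [(Nat.cast_nonneg e : (0:ℝ) ≤ e)]
    have p1 : AvoidPath d z (ρ - ((n₀ : ℝ) - ((i + e + (n - j) : ℕ) : ℝ)) / K) (i - 0) (c 0) (c i) :=
      (AvoidPath.of_fun (Nat.zero_le i) (fun k _ hk => he k (by omega))
        (fun k _ hk => ha k (by omega))).mono hρ'
    have p2 : AvoidPath d z (ρ - ((n₀ : ℝ) - ((i + e + (n - j) : ℕ) : ℝ)) / K) e (c i) (c j) :=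
      AvoidPath.geodesic hd _ _ hed (by rw [hed]; linarith [ha i (by omega)])
    have p3 : AvoidPath d z (ρ - ((n₀ : ℝ) - ((i + e + (n - j) : ℕ) : ℝ)) / K) (n - j) (c j) (c n) :=
      (AvoidPath.of_fun hj (fun k _ hk => he k (by omega))
        (fun k _ hk => ha k (by omega))).mono hρ'
    have := (p1.trans p2).trans p3
    rwa [h0, h1, Nat.sub_zero] at this
  · refine le_trans ?_ (ha i hi)
    gcongr
    linarith [(Nat.cast_nonneg n : (0:ℝ) ≤ n)]

/-- A Morse quasi-geodesic ray has superlinear divergence, at a rate depending only on the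
Morse gauge and the quasi-geodesic constant. -/
theorem exists_diverges_of_morse (hd : GraphMetric d) {C₀ : ℝ} (hC₀ : 1 ≤ C₀) (N : ℝ → ℝ) :
    ∃ R : ℕ → ℝ, ∀ γ : ℕ → X, QGOn d C₀ univ γ → MorseSet d N (range γ) → Diverges d R γ := by
  suffices hM : ∀ M : ℕ, ∃ R : ℝ, ∀ γ : ℕ → X, QGOn d C₀ univ γ → MorseSet d N (range γ) →
      ∀ r : ℝ, R ≤ r → ∀ t₁ t t₂ : ℕ, t₁ ≤ t → t ≤ t₂ →
        r ≤ M * ((t : ℝ) - t₁) → r ≤ M * ((t₂ : ℝ) - t) → ¬ AP d M r (γ t₁) (γ t₂) (γ t) by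
    choose R hR using hM
    exact ⟨R, fun γ h1 h2 M r => hR M γ h1 h2 r⟩
  intro M
  rcases Nat.eq_zero_or_pos M with rfl | hMpos
  · refine ⟨1, fun γ _ _ r hr t₁ t t₂ _ _ h1 _ => ?_⟩
    simp at h1; linarith
  have hM : (1 : ℝ) ≤ M := by exact_mod_cast hMpos
  -- `K` is chosen so that shortcuts move the path by at most `r / (2 M)`
  set K : ℝ := 2 * M * M with hKdef
  have hK : 1 ≤ K := by nlinarith
  set D := max (N (2 * (K + 1))) 0 with hD
  set B := D + C₀ * (C₀ * (2 * D + 1 + C₀)) + C₀ with hB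
  have hD0 : 0 ≤ D := le_max_right _ _
  have hB0 : 0 ≤ B := by positivity
  refine ⟨2 * M * B + 1, fun γ hγ hN r hr t₁ t t₂ h1 h2 _ _ hAP => ?_⟩
  obtain ⟨n₀, hn₀, hP⟩ := hAP
  obtain ⟨n, c, c0, cn, he, hQ, ha⟩ := exists_qg_of_avoidPath hd hK hP
  obtain ⟨i, hi, hid⟩ := exists_near_of_crossing (D := D) (J := 1) hd hC₀ zero_le_one hγ he (n := n)
    (fun i hi => by
      obtain ⟨_, ⟨j, rfl⟩, hj⟩ := hN.discrete (by linarith) hQ ⟨t₁, c0.symm⟩ ⟨t₂, cn.symm⟩ hi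
      exact ⟨j, trivial, hj.trans (le_max_left _ _)⟩)
    (t₁ := t₁) (t := t) (t₂ := t₂) trivial trivial trivial h1 h2
    (by rw [c0, hd.self]; exact hD0) (by rw [cn, hd.self]; exact hD0)
  have h3 := ha i hi
  have h4 : (n₀ : ℝ) / K ≤ r / (2 * M) := by
    rw [div_le_div_iff₀ (by linarith) (by linarith)]
    nlinarith
  have h5 : r / M = r / (2 * M) + r / (2 * M) := by field_simp; ring
  have h6 : r / (2 * M) ≤ B := by linarith
  rw [div_le_iff₀ (by linarith)] at h6
  nlinarith

end Discrete

/-! ### Divergence implies Morse -/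

section DivergenceMorse

variable {X : Type*} {d : X → X → ℝ}

/-- A quasi-geodesic far from `z`, filled in by geodesics between consecutive points. -/
theorem QGOn.avoidPath (hd : GraphMetric d) {C : ℝ} (hC : 1 ≤ C) {m : ℕ} {Q : ℕ → X}
    (hQ : QGOn d C (Iic m) Q) {z : X} {ρ : ℝ} (hz : ∀ k ≤ m, ρ + 2 * C ≤ d (Q k) z) {i j : ℕ}
    (hi : i ≤ m) (hj : j ≤ m) :
    ∃ n : ℕ, (n : ℝ) ≤ 2 * C * |(i : ℝ) - j| ∧ AvoidPath d z ρ n (Q i) (Q j) := by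
  have key : ∀ j i, i ≤ j → j ≤ m →
      ∃ n : ℕ, (n : ℝ) ≤ 2 * C * ((j : ℝ) - i) ∧ AvoidPath d z ρ n (Q i) (Q j) := by
    clear hi hj
    intro j i hij
    induction j, hij using Nat.le_induction with
    | base => intro hi; exact ⟨0, by simp, .refl _ (by linarith [hz i hi])⟩
    | succ j hij ih =>
      intro hj
      obtain ⟨n, hn, h⟩ := ih (by omega)
      obtain ⟨k, hk, -⟩ := hd.geod (Q j) (Q (j + 1))
      have h1 := (hQ j (by simp; omega) (j + 1) (by simpa using hj)).2
      have h2 : |(j : ℝ) - ((j + 1 : ℕ) : ℝ)| = 1 := by push_cast; simp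
      rw [h2, hk] at h1
      refine ⟨n + k, by push_cast; linarith, h.trans (AvoidPath.geodesic hd _ _ hk ?_)⟩
      linarith [hz j (by omega)]
  rcases le_total i j with h | h
  · obtain ⟨n, hn, h'⟩ := key j i h hj
    have : (i : ℝ) ≤ j := by exact_mod_cast h
    exact ⟨n, by rwa [abs_sub_comm, abs_of_nonneg (by linarith)], h'⟩
  · obtain ⟨n, hn, h'⟩ := key i j h hi
    have : (j : ℝ) ≤ i := by exact_mod_cast h
    exact ⟨n, by rwa [abs_of_nonneg (by linarith)], h'.symm hd⟩

/-- One side of the detour around `γ t`: starting from a point `γ u` at controlled distance from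
`γ t`, the quasi-geodesic `Q` (which starts at `γ e`) is reached far from `γ t`. -/
theorem exists_side_path (hd : GraphMetric d) {C₀ : ℝ} (hC₀ : 1 ≤ C₀) {γ Q : ℕ → X} {m : ℕ}
    (hγ : QGOn d C₀ univ γ) {r : ℝ} {t e ie : ℕ} (hie : ie ≤ m) (he : Q ie = γ e)
    (hr : 2 * C₀ ≤ r) (hmin : ∀ i ≤ m, r ≤ d (γ t) (Q i))
    (hcov : ∀ u, (t ≤ u ∧ u ≤ e) ∨ (e ≤ u ∧ u ≤ t) → ∃ i ≤ m, d (γ u) (Q i) ≤ r) :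
    ∃ u i k : ℕ, i ≤ m ∧ (k : ℝ) ≤ r ∧ (t ≤ e → t ≤ u) ∧ (e ≤ t → u ≤ t) ∧
      |(u : ℝ) - t| ≤ 4 * C₀ * r ∧ r ≤ 2 * C₀ * |(u : ℝ) - t| ∧
      AvoidPath d (γ t) (r / 2) k (γ u) (Q i) := by
  have low : ∀ u, r ≤ d (γ u) (γ t) → r ≤ 2 * C₀ * |(u : ℝ) - t| := by
    intro u hu
    have := (hγ u trivial t trivial).2
    nlinarith
  by_cases hfar : |(e : ℝ) - t| ≤ 4 * C₀ * r
  · have h1 := hmin ie hie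
    rw [he, hd.symm] at h1
    exact ⟨e, ie, 0, hie, by simp; linarith, id, id, hfar, low e h1,
      by rw [he]; exact .refl _ (by linarith)⟩
  · push Not at hfar
    set f := ⌊4 * C₀ * r⌋₊ with hf
    have hf0 : 0 ≤ 4 * C₀ * r := by nlinarith
    have f1 : (f : ℝ) ≤ 4 * C₀ * r := Nat.floor_le hf0
    have f2 : 4 * C₀ * r < f + 1 := Nat.lt_floor_add_one _
    obtain ⟨u, hu, hu1⟩ : ∃ u : ℕ, ((t ≤ u ∧ u ≤ e) ∨ (e ≤ u ∧ u ≤ t)) ∧ |(u : ℝ) - t| = f := by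
      rcases le_total e t with h | h
      · have h' : (e : ℝ) ≤ t := by exact_mod_cast h
        rw [abs_sub_comm, abs_of_nonneg (by linarith)] at hfar
        have h2 : e + f ≤ t := by
          have : (e : ℝ) + f ≤ t := by linarith
          exact_mod_cast this
        refine ⟨t - f, Or.inr ⟨by omega, by omega⟩, ?_⟩
        rw [Nat.cast_sub (by omega)]; simp
      · have h' : (t : ℝ) ≤ e := by exact_mod_cast h
        rw [abs_of_nonneg (by linarith)] at hfar
        have h2 : t + f ≤ e := by
          have : (t : ℝ) + f ≤ e := by linarith
          exact_mod_cast this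
        exact ⟨t + f, Or.inl ⟨by omega, by omega⟩, by simp⟩
    obtain ⟨i, hi, hi'⟩ := hcov u hu
    have h3 := hγ.le_mul hC₀ (mem_univ u) (mem_univ t)
    rw [hu1] at h3
    have h4 : 2 * r ≤ d (γ u) (γ t) := by nlinarith
    obtain ⟨k, hk, -⟩ := hd.geod (γ u) (Q i)
    have hne : e ≠ t := by
      rintro rfl
      simp at hfar; linarith
    refine ⟨u, i, k, hi, by rwa [← hk], fun _ => by omega, fun _ => by omega, by rwa [hu1],
      low u (by linarith), AvoidPath.geodesic hd _ _ hk (by linarith)⟩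

/-- Points of a diverging quasi-geodesic ray are close to every quasi-geodesic between two of its
points. -/
theorem Diverges.near (hd : GraphMetric d) {C₀ : ℝ} (hC₀ : 1 ≤ C₀) (R : ℕ → ℝ) {C : ℝ}
    (hC : 1 ≤ C) : ∃ r₁ : ℝ, 0 ≤ r₁ ∧ ∀ γ : ℕ → X, QGOn d C₀ univ γ → Diverges d R γ →
      ∀ (m : ℕ) (Q : ℕ → X), QGOn d C (Iic m) Q → ∀ t₁ t₂, t₁ ≤ t₂ → Q 0 = γ t₁ → Q m = γ t₂ →
      ∀ t, t₁ ≤ t → t ≤ t₂ → ∃ i ≤ m, d (γ t) (Q i) ≤ r₁ := by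
  obtain ⟨M, hM⟩ := exists_nat_ge (2 * C₀ + (2 + 2 * C ^ 2 * (4 + 8 * C₀ ^ 2)))
  have hM2 : 2 * C₀ ≤ M := by nlinarith [sq_nonneg C, sq_nonneg C₀, mul_nonneg (sq_nonneg C) (sq_nonneg C₀)]
  have hM0 : (2 : ℝ) ≤ M := by linarith
  refine ⟨max (R M) (2 * C₀ + 4 * C), by linarith [le_max_right (R M) (2 * C₀ + 4 * C)], ?_⟩
  intro γ hγ hdiv m Q hQ t₁ t₂ h12 hQ0 hQm
  have hmin : ∀ t, ∃ i ≤ m, ∀ j ≤ m, d (γ t) (Q i) ≤ d (γ t) (Q j) := by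
    intro t
    obtain ⟨i, hi, h⟩ := Finset.exists_min_image (Finset.range (m + 1)) (fun i => d (γ t) (Q i))
      ⟨0, by simp⟩
    exact ⟨i, by simpa [Nat.lt_succ_iff] using hi, fun j hj => h j (by simpa [Nat.lt_succ_iff] using hj)⟩
  choose j hj hjmin using hmin
  obtain ⟨t, ht, htmax⟩ := Finset.exists_max_image (Finset.Icc t₁ t₂) (fun t => d (γ t) (Q (j t)))
    ⟨t₁, by simp [h12]⟩
  simp only [Finset.mem_Icc] at ht htmax
  suffices h : d (γ t) (Q (j t)) ≤ max (R M) (2 * C₀ + 4 * C) from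
    fun t' h1 h2 => ⟨j t', hj t', (htmax t' ⟨h1, h2⟩).trans h⟩
  by_contra hcon
  push Not at hcon
  set r := d (γ t) (Q (j t)) with hr
  have hrR : R M ≤ r := (le_max_left _ _).trans hcon.le
  have hrC : 2 * C₀ + 4 * C ≤ r := (le_max_right _ _).trans hcon.le
  have hr0 : 0 ≤ r := by linarith
  obtain ⟨u₁, i₁, k₁, a1, a2, -, a4, a5, a6, a7⟩ := exists_side_path hd hC₀ hγ (r := r) (t := t)
    (Nat.zero_le m) hQ0 (by linarith) (fun i hi => hjmin t i hi)
    (fun u hu => ⟨j u, hj u, htmax u (by omega)⟩)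
  obtain ⟨u₂, i₂, k₂, b1, b2, b3, -, b5, b6, b7⟩ := exists_side_path hd hC₀ hγ (r := r) (t := t)
    le_rfl hQm (by linarith) (fun i hi => hjmin t i hi)
    (fun u hu => ⟨j u, hj u, htmax u (by omega)⟩)
  obtain ⟨n, hn, hp⟩ := hQ.avoidPath hd hC (z := γ t) (ρ := r / 2)
    (fun k hk => by rw [hd.symm]; linarith [hjmin t k hk]) a1 b1
  have hu1 := a4 ht.1
  have hu2 := b3 ht.2
  have hu1' : (u₁ : ℝ) ≤ t := by exact_mod_cast hu1
  have hu2' : (t : ℝ) ≤ u₂ := by exact_mod_cast hu2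
  have a5' : |(u₁ : ℝ) - u₂| ≤ 8 * C₀ * r := by
    have := abs_sub_le (u₁ : ℝ) t u₂
    rw [abs_sub_comm (t : ℝ)] at this
    linarith
  -- geodesics realise the lengths of the two side paths, so these bound the distances
  have dist_le : ∀ {k x y}, AvoidPath d (γ t) (r / 2) k x y → d x y ≤ k := by
    intro k x y h
    induction h with
    | refl x _ => simp [hd.self]
    | @step n x y w _ h1 _ ih => push_cast; linarith [hd.tri x y w]
  have e1 := dist_le a7
  have e2 := dist_le b7
  have e3 := (hγ u₁ trivial u₂ trivial).2
  have e4 := hQ.le_mul hC (i := i₁) (j := i₂) a1 b1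
  have e5 : d (Q i₁) (Q i₂) ≤ 2 * r + (8 * C₀ ^ 2 * r + C₀) := by
    have x1 := hd.tri (Q i₁) (γ u₁) (Q i₂)
    have x2 := hd.tri (γ u₁) (γ u₂) (Q i₂)
    rw [hd.symm (Q i₁) (γ u₁)] at x1
    have x3 : C₀ * |(u₁ : ℝ) - u₂| ≤ C₀ * (8 * C₀ * r) := by gcongr
    nlinarith
  have e6 : |(i₁ : ℝ) - i₂| ≤ C * (r * (4 + 8 * C₀ ^ 2)) := by
    refine e4.trans ?_
    gcongr
    nlinarith
  rw [abs_sub_comm, abs_of_nonneg (by linarith)] at a6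
  rw [abs_of_nonneg (by linarith)] at b6
  refine hdiv M r hrR u₁ t u₂ hu1 hu2 (a6.trans ?_) (b6.trans ?_)
    ⟨k₁ + n + k₂, ?_, ((a7.trans hp).trans (b7.symm hd)).mono ?_⟩
  · gcongr
  · gcongr
  · push_cast
    have e7 : (n : ℝ) ≤ 2 * C * (C * (r * (4 + 8 * C₀ ^ 2))) := hn.trans (by gcongr)
    nlinarith
  · gcongr

theorem Diverges.near_range (hd : GraphMetric d) {C₀ : ℝ} (hC₀ : 1 ≤ C₀) (R : ℕ → ℝ) {C : ℝ}
    (hC : 1 ≤ C) : ∃ D : ℝ, ∀ γ : ℕ → X, QGOn d C₀ univ γ → Diverges d R γ →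
      ∀ (m : ℕ) (Q : ℕ → X), QGOn d C (Iic m) Q → Q 0 ∈ range γ → Q m ∈ range γ →
      ∀ i ≤ m, InNbhd d (range γ) D (Q i) := by
  obtain ⟨r₁, hr₁, h⟩ := Diverges.near (X := X) hd hC₀ R hC
  refine ⟨r₁ + C * (C * (2 * r₁ + 2 * C₀ + C)) + C, fun γ hγ hdiv => ?_⟩
  have key : ∀ (m : ℕ) (Q : ℕ → X), QGOn d C (Iic m) Q → ∀ t₁ t₂, t₁ ≤ t₂ → Q 0 = γ t₁ →
      Q m = γ t₂ → ∀ i ≤ m,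
      InNbhd d (range γ) (r₁ + C * (C * (2 * r₁ + 2 * C₀ + C)) + C) (Q i) := by
    intro m Q hQ t₁ t₂ h12 h0 hm i hi
    obtain ⟨k, -, hk⟩ := exists_near_of_crossing hd (D := r₁) hC (by linarith : 0 ≤ 2 * C₀) hQ
      (P := fun k => γ (t₁ + k)) (n := t₂ - t₁)
      (fun k _ => by
        have := (hγ (t₁ + k) trivial (t₁ + (k + 1)) trivial).2
        have h2 : |((t₁ + k : ℕ) : ℝ) - ((t₁ + (k + 1) : ℕ) : ℝ)| = 1 := by push_cast; simp
        rw [h2] at this; linarith)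
      (fun k hk => h γ hγ hdiv m Q hQ t₁ t₂ h12 h0 hm (t₁ + k) (by omega) (by omega))
      (t₁ := 0) (t := i) (t₂ := m) (Nat.zero_le m) hi (le_refl m) (Nat.zero_le _) hi
      (by simp [h0, hd.self, hr₁]) (by rw [hm, Nat.add_sub_cancel' h12, hd.self]; exact hr₁)
    exact ⟨_, ⟨_, rfl⟩, by rwa [hd.symm]⟩
  intro m Q hQ h0 hm i hi
  obtain ⟨t₁, h0⟩ := h0
  obtain ⟨t₂, hm⟩ := hm
  rcases le_total t₁ t₂ with h12 | h12
  · exact key m Q hQ t₁ t₂ h12 h0.symm hm.symm i hi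
  · have := key m (fun i => Q (m - i)) ?_ t₂ t₁ h12 (by simpa using hm.symm)
      (by simpa using h0.symm) (m - i) (by omega)
    · simpa [Nat.sub_sub_self hi] using this
    · intro i hi j hj
      have := hQ (m - i) (by simp) (m - j) (by simp)
      rw [Nat.cast_sub hi, Nat.cast_sub hj] at this
      have h3 : |((m : ℝ) - i) - (m - j)| = |(i : ℝ) - j| := by
        rw [abs_sub_comm (i : ℝ)]; congr 1; ring
      rwa [h3] at this

/-- A diverging quasi-geodesic ray is Morse, with a gauge depending only on the constants. -/
theorem exists_morse_of_diverges (hd : GraphMetric d) {C₀ : ℝ} (hC₀ : 1 ≤ C₀) (R : ℕ → ℝ) :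
    ∃ N : ℝ → ℝ, ∀ γ : ℕ → X, QGOn d C₀ univ γ → Diverges d R γ → MorseSet d N (range γ) := by
  have h : ∀ C : ℝ, ∃ D : ℝ, 1 ≤ C → ∀ γ : ℕ → X, QGOn d C₀ univ γ → Diverges d R γ →
      ∀ (m : ℕ) (Q : ℕ → X), QGOn d C (Iic m) Q → Q 0 ∈ range γ → Q m ∈ range γ →
      ∀ i ≤ m, InNbhd d (range γ) D (Q i) := by
    intro C
    by_cases hC : 1 ≤ C
    · obtain ⟨D, hD⟩ := Diverges.near_range (X := X) hd hC₀ R hC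
      exact ⟨D, fun _ => hD⟩
    · exact ⟨0, fun h => absurd h hC⟩
  choose D hD using h
  exact ⟨_, fun γ hγ hdiv => MorseSet.of_discrete hd (D := D)
    fun C hC n Q h1 h2 h3 => hD C hC γ hγ hdiv n Q h1 h2 h3⟩

end DivergenceMorse

/-! ### Relatively wide subgroups: linear detours -/

section Cones

variable {X : Type*} {d : X → X → ℝ} {ω : Ultrafilter ℕ} {s : ℕ → ℝ}

/-- For sequences at bounded rescaled distance, the cone distance is a genuine ultralimit. -/
theorem tendsto_coneDist (hd : GraphMetric d) (hs : ∀ n, 0 < s n) {x y : ℕ → X} {B : ℝ}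
    (h : ∀ᶠ n in (ω : Filter ℕ), d (x n) (y n) ≤ B * s n) :
    Tendsto (fun n => d (x n) (y n) / s n) ω (𝓝 (coneDist ω d s x y)) := by
  set f : ℕ → ℝ := fun n => d (x n) (y n) / s n with hf
  have hmem : Icc 0 B ∈ ω.map f := by
    rw [Ultrafilter.mem_map]
    filter_upwards [h] with n hn
    exact ⟨div_nonneg (hd.nonneg _ _) (hs n).le, (div_le_iff₀ (hs n)).2 hn⟩
  obtain ⟨a, -, ha⟩ := isCompact_Icc.ultrafilter_le_nhds (ω.map f) (le_principal_iff.2 hmem)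
  have ht : Tendsto f ω (𝓝 a) := ha
  have : coneDist ω d s x y = a := ht.limUnder_eq
  rwa [this]

variable {z : ℕ → X}

/-- A connected subset of the complement of a point `z` of an asymptotic cone is chained by paths
of linear length avoiding balls of linear radius. -/
theorem exists_AP_of_isPreconnected (hd : GraphMetric d) (hs : ∀ n, 0 < s n) {A : Set (ℕ → X)}
    (hA : A ⊆ {w ∈ conePts ω d z s | coneDist ω d s w z ≠ 0})
    (hconn : @IsPreconnected (ℕ → X) (coneTop ω d z s) A) {x y : ℕ → X} (hx : x ∈ A) (hy : y ∈ A) :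
    ∃ M : ℕ, 1 ≤ M ∧ ∀ᶠ n in (ω : Filter ℕ), AP d M (s n) (x n) (y n) (z n) := by
  set Rel : (ℕ → X) → (ℕ → X) → Prop := fun u v =>
    ∃ M : ℕ, 1 ≤ M ∧ ∀ᶠ n in (ω : Filter ℕ), AP d M (s n) (u n) (v n) (z n) with hRel
  have rel_symm : ∀ {u v}, Rel u v → Rel v u := by
    rintro u v ⟨M, h1, h2⟩
    exact ⟨M, h1, h2.mono fun n h => h.symm hd⟩
  have rel_trans : ∀ {u v w}, Rel u v → Rel v w → Rel u w := by
    rintro u v w ⟨M, h1, h2⟩ ⟨M', h1', h2'⟩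
    refine ⟨M + M', by omega, ?_⟩
    filter_upwards [h2, h2'] with n h h'
    have := h.trans h' (by positivity) (by positivity) (hs n).le
    exact_mod_cast this
  have bdd : ∀ u ∈ A, ∀ v ∈ A, ∃ B, ∀ᶠ n in (ω : Filter ℕ), d (u n) (v n) ≤ B * s n := by
    intro u hu v hv
    obtain ⟨B, hB⟩ := (hA hu).1
    obtain ⟨B', hB'⟩ := (hA hv).1
    refine ⟨B + B', ?_⟩
    filter_upwards [hB, hB'] with n h h'
    have := hd.tri (u n) (z n) (v n)
    rw [hd.symm (u n) (z n)] at this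
    linarith
  have tz : ∀ u ∈ A, Tendsto (fun n => d (u n) (z n) / s n) ω (𝓝 (coneDist ω d s u z)) := by
    intro u hu
    obtain ⟨B, hB⟩ := (hA hu).1
    exact tendsto_coneDist hd hs (B := B) (hB.mono fun n h => by rwa [hd.symm])
  have pos : ∀ u ∈ A, 0 < coneDist ω d s u z := by
    intro u hu
    refine lt_of_le_of_ne ?_ (hA hu).2.symm
    exact ge_of_tendsto' (tz u hu) fun n => div_nonneg (hd.nonneg _ _) (hs n).le
  have self : ∀ u, coneDist ω d s u u = 0 := by
    intro u
    have : Tendsto (fun n => d (u n) (u n) / s n) ω (𝓝 0) := by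
      simp only [hd.self, zero_div]; exact tendsto_const_nhds
    exact this.limUnder_eq
  have near : ∀ u ∈ A, ∀ v ∈ A, coneDist ω d s u v < coneDist ω d s u z / 2 → Rel u v := by
    intro u hu v hv huv
    set D := coneDist ω d s u z with hD
    have hD0 : 0 < D := pos u hu
    obtain ⟨B, hB⟩ := bdd u hu v hv
    have e1 := (tendsto_coneDist hd hs hB).eventually (gt_mem_nhds huv)
    have e2 := (tz u hu).eventually (lt_mem_nhds (show D * (3 / 4) < D by linarith))
    obtain ⟨M, hM⟩ := exists_nat_ge (max 1 (max (D / 2) (4 / D)))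
    have m1 : (1 : ℝ) ≤ M := (le_max_left _ _).trans hM
    have m2 : D / 2 ≤ M := (le_max_left _ _).trans ((le_max_right _ _).trans hM)
    have m3 : 4 / D ≤ M := (le_max_right _ _).trans ((le_max_right _ _).trans hM)
    refine ⟨M, by exact_mod_cast m1, ?_⟩
    filter_upwards [e1, e2] with n h1 h2
    have hsn := hs n
    rw [div_lt_iff₀ hsn] at h1
    rw [lt_div_iff₀ hsn] at h2
    refine AP.geodesic hd (h1.le.trans (by gcongr)) ?_
    have h4 : s n / M ≤ D / 4 * s n := by
      rw [div_le_iff₀ (by linarith)]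
      rw [div_le_iff₀ hD0] at m3
      nlinarith
    linarith
  let _ : TopologicalSpace (ℕ → X) := coneTop ω d z s
  have hopen : ∀ u ∈ A, IsOpen {v | coneDist ω d s u v < coneDist ω d s u z / 2} := fun u hu =>
    TopologicalSpace.isOpen_generateFrom_of_mem
      ⟨u, (hA hu).1, coneDist ω d s u z / 2, by linarith [pos u hu], rfl⟩
  by_contra hxy
  have hc := hconn (⋃ u ∈ {u ∈ A | Rel x u}, {v | coneDist ω d s u v < coneDist ω d s u z / 2})
    (⋃ u ∈ {u ∈ A | ¬ Rel x u}, {v | coneDist ω d s u v < coneDist ω d s u z / 2})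
    (isOpen_biUnion fun u hu => hopen u hu.1) (isOpen_biUnion fun u hu => hopen u hu.1) ?_
    ⟨x, hx, ?_⟩ ⟨y, hy, ?_⟩
  · obtain ⟨v, hv, h1, h2⟩ := hc
    simp only [mem_iUnion, mem_ofPred_eq] at h1 h2
    obtain ⟨u, ⟨hu, hxu⟩, huv⟩ := h1
    obtain ⟨u', ⟨hu', hxu'⟩, huv'⟩ := h2
    exact hxu' (rel_trans (rel_trans hxu (near u hu v hv huv)) (rel_symm (near u' hu' v hv huv')))
  · intro v hv
    have hvv : coneDist ω d s v v < coneDist ω d s v z / 2 := by rw [self]; linarith [pos v hv]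
    by_cases h : Rel x v
    · exact Or.inl (mem_biUnion (show v ∈ {u ∈ A | Rel x u} from ⟨hv, h⟩) hvv)
    · exact Or.inr (mem_biUnion (show v ∈ {u ∈ A | ¬ Rel x u} from ⟨hv, h⟩) hvv)
  · have hvv : coneDist ω d s x x < coneDist ω d s x z / 2 := by rw [self]; linarith [pos x hx]
    exact mem_biUnion (show x ∈ {u ∈ A | Rel x u} from ⟨hx, near x hx x hx hvv⟩) hvv
  · have hvv : coneDist ω d s y y < coneDist ω d s y z / 2 := by rw [self]; linarith [pos y hy]
    exact mem_biUnion (show y ∈ {u ∈ A | ¬ Rel x u} from ⟨hy, hxy⟩) hvv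

end Cones

section

variable {G : Type*} [Group G]

/-- Any two points of a relatively wide subgroup at distance comparable to `r` from a point `z` are
joined, for `r` large, by a path of length linear in `r` avoiding a ball around `z` of radius linear
in `r`. -/
theorem RelativelyWide.exists_AP {S : Set G} (hS : Subgroup.closure S = ⊤) {H : Subgroup G}
    (hw : RelativelyWide S H) {c K : ℝ} (hc : 0 < c) :
    ∃ M : ℕ, 1 ≤ M ∧ ∀ r : ℝ, M ≤ r → ∀ x ∈ H, ∀ y ∈ H, ∀ z,
      c * r ≤ wdist S x z → wdist S x z ≤ K * r → c * r ≤ wdist S y z → wdist S y z ≤ K * r →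
      AP (wdist S) M r x y z := by
  have hd := graphMetric_wdist hS
  by_contra hcon
  push Not at hcon
  have hcon' : ∀ n : ℕ, ∃ r : ℝ, ((n + 1 : ℕ) : ℝ) ≤ r ∧ ∃ x ∈ H, ∃ y ∈ H, ∃ z,
      c * r ≤ wdist S x z ∧ wdist S x z ≤ K * r ∧ c * r ≤ wdist S y z ∧ wdist S y z ≤ K * r ∧
      ¬ AP (wdist S) ((n + 1 : ℕ) : ℝ) r x y z := fun n => hcon (n + 1) (by omega)
  choose s hs x hx y hy z h1 h2 h3 h4 h5 using hcon'
  have hs0 : ∀ n, 0 < s n := fun n => lt_of_lt_of_le (by positivity) (hs n)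
  have hstend : Tendsto s atTop atTop :=
    tendsto_atTop_mono (fun n => (by push_cast; linarith [hs n] : (n : ℝ) ≤ ((n + 1 : ℕ) : ℝ)).trans (hs n))
      tendsto_natCast_atTop_atTop
  set ω : Ultrafilter ℕ := hyperfilter ℕ with hω
  have hωc : (ω : Filter ℕ) ≤ cofinite := hyperfilter_le_cofinite
  have cx : x ∈ conePts ω (wdist S) z s := ⟨K, .of_forall fun n => by rw [hd.symm]; exact h2 n⟩
  have cy : y ∈ conePts ω (wdist S) z s := ⟨K, .of_forall fun n => by rw [hd.symm]; exact h4 n⟩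
  have cz : z ∈ conePts ω (wdist S) z s := ⟨0, .of_forall fun n => by rw [hd.self]; simp⟩
  have ne : ∀ u : ℕ → G, (∀ n, c * s n ≤ wdist S (u n) (z n)) → (∀ n, wdist S (u n) (z n) ≤ K * s n) →
      coneDist ω (wdist S) s u z ≠ 0 := by
    intro u hu hu'
    have := ge_of_tendsto' (tendsto_coneDist (ω := ω) hd hs0 (.of_forall hu'))
      (fun n => (le_div_iff₀ (hs0 n)).2 (hu n))
    exact (lt_of_lt_of_le hc this).ne'
  have hsep := hw ω hωc z s hs0 hstend x y z hx hy cx cy cz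
  unfold ConeSeparates at hsep
  have hA := not_not.1 fun h => hsep ⟨ne x h1 h2, ne y h3 h4, h⟩
  obtain ⟨A, hA, hxA, hyA, hconn⟩ := hA
  obtain ⟨M, hM, hAP⟩ := exists_AP_of_isPreconnected hd hs0 hA hconn hxA hyA
  have hge : ∀ᶠ n in (ω : Filter ℕ), M ≤ n :=
    (hωc.trans Nat.cofinite_eq_atTop.le) (eventually_ge_atTop M)
  obtain ⟨n, hn, hn'⟩ := (hAP.and hge).exists
  refine h5 n (hn.mono (by positivity) ?_ (hs0 n).le)
  exact_mod_cast (by omega : M ≤ n + 1)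

end

/-! ### Halfspaces of the tree adjacent to the base vertex -/

section Tree

variable {VT : Type*} {T : SimpleGraph VT}

theorem tree_exists_closer (hT : T.IsTree) {q v : VT} (h : q ≠ v) :
    ∃ w, T.Adj q w ∧ T.dist v w < T.dist v q := by
  obtain ⟨W, hW⟩ := hT.1.exists_walk_length_eq_dist q v
  cases W with
  | nil => exact absurd rfl h
  | @cons _ w _ hadj W =>
    refine ⟨w, hadj, ?_⟩
    have := SimpleGraph.dist_le W
    rw [SimpleGraph.Walk.length_cons] at hW
    rw [T.dist_comm (u := v), T.dist_comm (u := v)]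
    omega

theorem tree_closer_unique (hT : T.IsTree) {q v w w' : VT} (hw : T.Adj q w) (hw' : T.Adj q w')
    (h : T.dist v w < T.dist v q) (h' : T.dist v w' < T.dist v q) : w = w' := by
  have key : ∀ w, T.Adj q w → T.dist v w < T.dist v q →
      ∃ W : T.Walk q v, W.IsPath ∧ W.snd = w := by
    intro w hw h
    obtain ⟨W, hW⟩ := hT.1.exists_walk_length_eq_dist w v
    refine ⟨.cons hw W, SimpleGraph.Walk.isPath_of_length_eq_dist _ ?_, by simp⟩
    have h1 := SimpleGraph.dist_le (SimpleGraph.Walk.cons hw W)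
    rw [SimpleGraph.Walk.length_cons] at h1 ⊢
    rw [T.dist_comm (u := v), T.dist_comm (u := v)] at h
    omega
  obtain ⟨W, hW, h1⟩ := key w hw h
  obtain ⟨W', hW', h2⟩ := key w' hw' h'
  have := congrArg Subtype.val ((hT.2.subsingleton_path q v).elim ⟨W, hW⟩ ⟨W', hW'⟩)
  simp only at this
  rw [← h1, ← h2, this]

theorem halfspace_boundary (hT : T.IsTree) {p b q q' : VT} (hpb : T.Adj p b) (hq : T.Adj q q')
    (h : q ∈ halfspace T p b) (h' : q' ∉ halfspace T p b) : q = b ∧ q' = p := by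
  simp only [halfspace, mem_ofPred_eq, not_lt] at h h'
  have d1 := hT.dist_ne_of_adj q' hpb
  have t1 : T.dist q' b ≤ T.dist q' q + T.dist q b := hT.1.dist_triangle
  have t2 : T.dist q p ≤ T.dist q q' + T.dist q' p := hT.1.dist_triangle
  have t3 : T.dist q p ≤ T.dist q b + T.dist b p := hT.1.dist_triangle
  rw [SimpleGraph.dist_eq_one_iff_adj.2 hq.symm] at t1
  rw [SimpleGraph.dist_eq_one_iff_adj.2 hq] at t2
  rw [SimpleGraph.dist_eq_one_iff_adj.2 hpb.symm] at t3
  by_cases hqb : q = b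
  · subst hqb
    rw [SimpleGraph.dist_self] at *
    refine ⟨rfl, (hT.1.dist_eq_zero_iff).1 ?_⟩
    omega
  · exfalso
    -- both `q'` and the neighbour `w` of `q` towards `b` are closer to `p` than `q`
    obtain ⟨w, hw, hwb⟩ := tree_exists_closer hT hqb
    have t4 : T.dist w p ≤ T.dist w b + T.dist b p := hT.1.dist_triangle
    rw [SimpleGraph.dist_eq_one_iff_adj.2 hpb.symm] at t4
    rw [T.dist_comm (u := b), T.dist_comm (u := b)] at hwb
    have : w = q' := tree_closer_unique hT (v := p) hw hq
      (by rw [T.dist_comm (u := p), T.dist_comm (u := p)]; omega)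
      (by rw [T.dist_comm (u := p), T.dist_comm (u := p)]; omega)
    subst this
    omega

end Tree

section Splitting

variable {G : Type*} [Group G]

/-- The coarse structure of `G` around a vertex group `V` seen from the tree: the complement of `V`
is the disjoint union of the sets `hs b`, and the boundary of `hs b` is close to a subset `P b` of
`V`, any two points of which lie in a common left coset of one of the subgroups `E i`. -/
structure Splitting (S : Set G) (V : Subgroup G) {β ι : Type*} (hs : β → Set G) (P : β → Set G)
    (E : ι → Subgroup G) (R : ℕ) : Prop where
  one_le : 1 ≤ R
  vertex : ∀ g ∈ V, ∀ b, g ∉ hs b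
  cover : ∀ g, g ∉ V → ∃ b, g ∈ hs b
  disj : ∀ g b b', g ∈ hs b → g ∈ hs b' → b = b'
  mem : ∀ b, ∀ v ∈ P b, v ∈ V
  coset : ∀ b, ∀ v ∈ P b, ∀ w ∈ P b, ∃ i, v⁻¹ * w ∈ E i
  cross : ∀ b g g', g ∈ hs b → g' ∉ hs b → wdist S g g' ≤ 1 →
    ∃ v ∈ P b, wdist S v g ≤ R ∧ wdist S v g' ≤ R

/-- The splitting at a vertex of a tree on which `G` acts. -/
theorem exists_splitting {VT : Type*} [MulAction G VT] (S : Finset G)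
    (hS : Subgroup.closure (S : Set G) = ⊤) (T : SimpleGraph VT) (hact : ActsOnTree G T) (p : VT) :
    ∃ (B : Finset VT) (hs P : VT → Set G) (R : ℕ), (∀ b ∈ B, T.Adj p b) ∧
      Splitting (S : Set G) (MulAction.stabilizer G p) hs P (fun b : B => edgeStab G p b) R := by
  classical
  obtain ⟨hT, hadj, -⟩ := hact
  have hd := graphMetric_wdist hS
  set V := MulAction.stabilizer G p with hV
  -- a fixed representative of each `V`-orbit of vertices
  set rep : VT → VT := fun b => Quotient.out (Quotient.mk (MulAction.orbitRel V VT) b) with hrep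
  have rep_mem : ∀ b, ∃ w : V, w • b = rep b := fun b =>
    Quotient.mk_out (s := MulAction.orbitRel V VT) b
  have rep_smul : ∀ (v : V) b, rep (v • b) = rep b := by
    intro v b
    have : Quotient.mk (MulAction.orbitRel V VT) (v • b) = Quotient.mk _ b :=
      Quotient.sound ⟨v, rfl⟩
    simp only [hrep, this]
  -- finitely many darts of the tree describe the edges crossed by a generator
  have W : ∀ a : G, T.Walk p (a • p) := fun a => Classical.choice (hT.1 p (a • p))
  have hAfin := WL.finite (S := (S : Set G)) S.finite_toSet 1
  set 𝒟 : Finset T.Dart := hAfin.toFinset.biUnion fun a => (W a).darts.toFinset with h𝒟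
  have hh : ∀ e : T.Dart, ∃ h : G, (∃ h : G, h • e.snd = p ∧ rep (h • e.fst) = h • e.fst) →
      h • e.snd = p ∧ rep (h • e.fst) = h • e.fst := by
    intro e
    by_cases H : ∃ h : G, h • e.snd = p ∧ rep (h • e.fst) = h • e.fst
    · exact ⟨H.choose, fun _ => H.choose_spec⟩
    · exact ⟨1, fun h => absurd h H⟩
  choose h hh using hh
  set R₀ := 𝒟.sup fun e => wordLength (S : Set G) (h e) with hR₀
  set B : Finset VT := (𝒟.image fun e => h e • e.fst).filter fun b => T.Adj p b with hB
  refine ⟨B, fun b => {g | T.Adj p b ∧ g • p ∈ halfspace T p b},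
    fun b => {v | v ∈ V ∧ rep b ∈ B ∧ v • rep b = b}, R₀ + 1, fun b hb => (Finset.mem_filter.1 hb).2,
    ⟨by omega, ?_, ?_, ?_, fun b v hv => hv.1, ?_, ?_⟩⟩
  · rintro g hg b ⟨hb, h2⟩
    rw [MulAction.mem_stabilizer_iff.1 hg] at h2
    simp [halfspace] at h2
  · intro g hg
    obtain ⟨b, hb, hlt⟩ := tree_exists_closer hT (q := p) (v := g • p)
      (fun h => hg (MulAction.mem_stabilizer_iff.2 h.symm))
    exact ⟨b, hb, hlt⟩
  · rintro g b b' ⟨hb, h1⟩ ⟨hb', h2⟩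
    exact tree_closer_unique hT hb hb' h1 h2
  · rintro b v ⟨hv, hvB, hvb⟩ w ⟨hw, -, hwb⟩
    refine ⟨⟨rep b, hvB⟩, Subgroup.mem_inf.2 ⟨mul_mem (inv_mem hv) hw, ?_⟩⟩
    rw [MulAction.mem_stabilizer_iff, mul_smul, hwb, inv_smul_eq_iff, hvb]
  · rintro b g g' ⟨hb, hg⟩ hg' hgg'
    have hg'' : g' • p ∉ halfspace T p b := fun h => hg' ⟨hb, h⟩
    have ha : WL (S : Set G) 1 (g⁻¹ * g') := (wdist_le_iff hS g g' 1).1 (by simpa using hgg')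
    obtain ⟨e, he, h1, h2⟩ := (W (g⁻¹ * g')).exists_boundary_dart
      {u | g • u ∈ halfspace T p b} hg (by
        simp only [mem_ofPred_eq, ← mul_smul, mul_inv_cancel_left]; exact hg'')
    have he𝒟 : e ∈ 𝒟 := Finset.mem_biUnion.2 ⟨_, hAfin.mem_toFinset.2 ha, by simpa using he⟩
    obtain ⟨e1, e2⟩ := halfspace_boundary hT hb (hadj g _ _ e.adj) h1 h2
    obtain ⟨w, hw⟩ := rep_mem b
    have hwp : (w : G) • p = p := w.2
    have hw' : (w : G) • b = rep b := hw
    obtain ⟨h3, h4⟩ := hh e ⟨w * g, by rw [mul_smul, e2, hwp], by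
      rw [mul_smul, e1]
      exact (rep_smul w b).trans hw'.symm⟩
    have hv : g * (h e)⁻¹ ∈ V := by
      rw [MulAction.mem_stabilizer_iff, mul_smul, inv_smul_eq_iff.2 h3.symm, e2]
    have hvb : (g * (h e)⁻¹) • h e • e.fst = b := by rw [mul_smul, inv_smul_smul, e1]
    have hrb : rep b = h e • e.fst := by
      rw [← h4]
      have := rep_smul ⟨_, hv⟩ (h e • e.fst)
      rw [← this]
      exact congrArg rep hvb.symm
    have hR : wordLength (S : Set G) (h e) ≤ R₀ :=
      Finset.le_sup (f := fun e => wordLength (S : Set G) (h e)) he𝒟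
    have hvg : wdist (S : Set G) (g * (h e)⁻¹) g ≤ R₀ := by
      rw [wdist]; simp only [mul_inv_rev, inv_inv, inv_mul_cancel_right]; exact_mod_cast hR
    refine ⟨g * (h e)⁻¹, ⟨hv, ?_, by rw [hrb]; exact hvb⟩, ?_, ?_⟩
    · rw [hB, Finset.mem_filter]
      refine ⟨Finset.mem_image.2 ⟨e, he𝒟, hrb.symm⟩, ?_⟩
      have := hadj w _ _ hb
      rwa [hwp, hw'] at this
    · push_cast; linarith
    · push_cast; linarith [hd.tri (g * (h e)⁻¹) g g']

end Splitting

/-! ### Pushing paths into the vertex group -/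

section Chain

variable {G : Type*} [Group G]

/-- A path of `m` edges in `G` between two points of `V` can be pushed into `V`: each excursion into
a set `hs b` is replaced by a jump between two points of `P b`.  Here `Good n v w` says that `v` and
`w` can be joined at cost `n`; the total cost is linear in `m`. -/
theorem Splitting.chain {S : Set G} {V : Subgroup G} {β ι : Type*} {hs P : β → Set G}
    {E : ι → Subgroup G} {R : ℕ} (h : Splitting S V hs P E R) (hd : GraphMetric (wdist S))
    {m : ℕ} {g : ℕ → G} (hg : IsEdgePath (wdist S) m g) (h0 : g 0 ∈ V) (hm : g m ∈ V)
    {Good : ℕ → V → V → Prop} (refl : ∀ n v, Good n v v)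
    (trans : ∀ n n' u v w, Good n u v → Good n' v w → Good (n + n') u w)
    (mono : ∀ n n' v w, n ≤ n' → Good n v w → Good n' v w) {A : ℕ}
    (small : ∀ i ≤ m, ∀ v w : V, wdist S (v : G) (g i) ≤ R → wdist S (w : G) (g i) ≤ R → Good A v w)
    (large : ∀ i j, i ≤ j → j ≤ m → ∀ b, ∀ v w : V, (v : G) ∈ P b → (w : G) ∈ P b →
      wdist S (v : G) (g i) ≤ R → wdist S (w : G) (g j) ≤ R → Good (A * (j - i) + A) v w) :
    Good (2 * A * m) ⟨g 0, h0⟩ ⟨g m, hm⟩ := by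
  have hR : (1 : ℝ) ≤ R := by exact_mod_cast h.one_le
  -- a point of `V` tracking `g (i + 1)` when the path has just entered the part of `G` containing it
  set St : ℕ → ℕ → V → Prop := fun i₀ i v => i₀ ≤ i ∧ wdist S (v : G) (g i₀) ≤ R ∧
    ((i₀ = i ∧ (v : G) = g i) ∨ ∃ b, g i ∈ hs b ∧ (v : G) ∈ P b) with hSt
  have enter : ∀ i < m, (∀ b, g i ∈ hs b → g (i + 1) ∉ hs b) → ∃ v, St (i + 1) (i + 1) v := by
    intro i hi hne
    by_cases hV : g (i + 1) ∈ V
    · exact ⟨⟨_, hV⟩, le_rfl, by rw [hd.self]; linarith, Or.inl ⟨rfl, rfl⟩⟩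
    · obtain ⟨b, hb⟩ := h.cover _ hV
      obtain ⟨v, hv, h1, -⟩ := h.cross b _ _ hb (fun h => hne b h hb) (by
        rw [hd.symm]; exact hg i hi)
      exact ⟨⟨v, h.mem b v hv⟩, le_rfl, h1, Or.inr ⟨b, hb, hv⟩⟩
  have main : ∀ k i₀ i v, i + k = m → St i₀ i v → Good (2 * A * (m - i₀)) v ⟨g m, hm⟩ := by
    intro k
    induction k with
    | zero =>
      rintro i₀ i v hik ⟨hi, hvi, hst⟩
      obtain rfl : i = m := by omega
      rcases hst with ⟨-, hv⟩ | ⟨b, hb, -⟩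
      · have : v = ⟨g i, hm⟩ := Subtype.ext hv
        rw [this]; exact refl _ _
      · exact absurd hb (h.vertex _ hm b)
    | succ k ih =>
      rintro i₀ i v hik ⟨hi, hvi, hst⟩
      have him : i < m := by omega
      rcases hst with ⟨rfl, hv⟩ | ⟨b, hb, hv⟩
      · obtain ⟨v', hv'⟩ := enter i₀ him (fun b hb => absurd hb (h.vertex _ (hv ▸ v.2) b))
        have s1 := small (i₀ + 1) (by omega) v v' (by rw [hv]; exact (hg i₀ him).trans hR) hv'.2.1
        refine mono _ _ _ _ ?_ (trans _ _ _ _ _ s1 (ih _ _ v' (by omega) hv'))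
        obtain ⟨c, rfl⟩ : ∃ c, m = i₀ + 1 + c := ⟨k, by omega⟩
        rw [show i₀ + 1 + c - (i₀ + 1) = c by omega, show i₀ + 1 + c - i₀ = c + 1 by omega]
        nlinarith
      · by_cases hb' : g (i + 1) ∈ hs b
        · exact ih i₀ (i + 1) v (by omega) ⟨by omega, hvi, Or.inr ⟨b, hb', hv⟩⟩
        · obtain ⟨v', hv'⟩ := enter i him (fun b' h1 h2 => hb' (h.disj _ _ _ hb h1 ▸ h2))
          obtain ⟨w, hw, w1, w2⟩ := h.cross b _ _ hb hb' (hg i him)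
          have s0 := large i₀ i hi him.le b v ⟨w, h.mem b w hw⟩ hv hw hvi w1
          have s1 := small (i + 1) (by omega) ⟨w, h.mem b w hw⟩ v' w2 hv'.2.1
          refine mono _ _ _ _ ?_
            (trans _ _ _ _ _ (trans _ _ _ _ _ s0 s1) (ih _ _ v' (by omega) hv'))
          obtain ⟨c, rfl⟩ : ∃ c, m = i + 1 + c := ⟨k, by omega⟩
          obtain ⟨e, rfl⟩ : ∃ e, i = i₀ + e := ⟨i - i₀, by omega⟩
          rw [show i₀ + e + 1 + c - (i₀ + e + 1) = c by omega, show i₀ + e - i₀ = e by omega,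
            show i₀ + e + 1 + c - i₀ = e + 1 + c by omega]
          nlinarith
  exact main m 0 0 ⟨g 0, h0⟩ (by omega) ⟨le_rfl, by rw [hd.self]; linarith, Or.inl ⟨rfl, rfl⟩⟩

/-- The inclusion of a finitely generated subgroup is Lipschitz for the word metrics. -/
theorem exists_wdist_le_of_subgroup {S : Set G} (hS : Subgroup.closure S = ⊤) {H : Subgroup G}
    (TH : Finset H) (hTH : Subgroup.closure (TH : Set H) = ⊤) :
    ∃ C : ℕ, ∀ v w : H, wdist S (v : G) (w : G) ≤ C * wdist (TH : Set H) v w := by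
  refine ⟨TH.sup fun t => wordLength S (t : G), fun v w => ?_⟩
  have := WL.map (S := S) H.subtype (k := TH.sup fun t => wordLength S (t : G))
    (fun t ht => (wl_iff hS _ _).2 (Finset.le_sup (f := fun t : H => wordLength S (t : G)) ht))
    (wl_wordLength hTH (v⁻¹ * w))
  have h2 := this.wordLength_le
  have h3 : H.subtype (v⁻¹ * w) = (v : G)⁻¹ * w := by simp
  rw [h3] at h2
  rw [wdist, wdist]
  exact_mod_cast h2

/-- The vertex group is finitely generated, and its word metrics are controlled by that of `G`. -/
theorem Splitting.undistorted {S : Finset G} (hS : Subgroup.closure (S : Set G) = ⊤) {V : Subgroup G}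
    {β ι : Type*} [Finite ι] {hs P : β → Set G} {E : ι → Subgroup G} {R : ℕ}
    (h : Splitting (S : Set G) V hs P E R) (hEV : ∀ i, E i ≤ V)
    (hE : ∀ i, FGUndistorted (S : Set G) (E i)) :
    ∃ T : Finset V, Subgroup.closure (T : Set V) = ⊤ ∧ ∃ C : ℕ, ∀ v w : V,
      wdist (T : Set V) v w ≤ C * wdist (S : Set G) (v : G) (w : G) := by
  classical
  have := Fintype.ofFinite ι
  have hd := graphMetric_wdist hS
  choose TE hTE CE hCE1 hCE using hE
  obtain ⟨C, hC⟩ : ∃ C : ℕ, ∀ i, CE i ≤ C := by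
    obtain ⟨C, hC⟩ := (Set.finite_range CE).bddAbove
    obtain ⟨n, hn⟩ := exists_nat_ge C
    exact ⟨n, fun i => (hC ⟨i, rfl⟩).trans hn⟩
  set f : ∀ i, E i →* V := fun i => Subgroup.inclusion (hEV i) with hf
  have hfin : {v : V | WL (S : Set G) (2 * R) (v : G)}.Finite :=
    (WL.finite S.finite_toSet (2 * R)).preimage (f := fun v : V => (v : G))
      Subtype.val_injective.injOn
  set T : Finset V := hfin.toFinset ∪ Finset.univ.biUnion fun i => (TE i).image (f i) with hT
  have hTsmall : ∀ v : V, WL (S : Set G) (2 * R) (v : G) → v ∈ (T : Set V) := fun v hv => by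
    rw [hT, Finset.mem_coe]; exact Finset.mem_union_left _ (hfin.mem_toFinset.2 hv)
  have hTE' : ∀ i, ∀ t ∈ TE i, f i t ∈ (T : Set V) := fun i t ht => by
    rw [hT, Finset.mem_coe]
    exact Finset.mem_union_right _ (Finset.mem_biUnion.2
      ⟨i, Finset.mem_univ _, Finset.mem_image_of_mem _ ht⟩)
  set A := C * (2 * R) + C + 1 with hA
  have key : ∀ (m : ℕ) (v w : V), wdist (S : Set G) (v : G) (w : G) = m →
      WL (T : Set V) (2 * A * m) (v⁻¹ * w) := by
    intro m v w hvw
    obtain ⟨m', hm', c, c0, cm, hc⟩ := hd.geod (v : G) (w : G)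
    obtain rfl : m' = m := by exact_mod_cast hm'.symm.trans hvw
    have hedge : IsEdgePath (wdist (S : Set G)) m' c := fun i hi => by
      rw [hc i hi.le (i + 1) hi]; push_cast; simp
    have := h.chain hd hedge (c0 ▸ v.2) (cm ▸ w.2) (Good := fun n v w => WL (T : Set V) n (v⁻¹ * w))
      (fun n v => by rw [inv_mul_cancel]; exact WL.one _ _)
      (fun n n' u v w h1 h2 => by
        have := h1.mul h2
        rwa [mul_assoc, mul_inv_cancel_left] at this)
      (fun n n' v w hn h => h.mono hn) (A := A) ?_ ?_
    · simpa [c0, cm] using this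
    · intro i hi v w hv hw
      refine (WL.of_mem (hTsmall _ ?_)).mono (by omega)
      have h1 := hd.tri (v : G) (c i) w
      rw [hd.symm (c i)] at h1
      have := (wdist_le_iff hS (v : G) w (2 * R)).1 (by push_cast; linarith)
      simpa using this
    · intro i j hij hj b v w hv hw hvi hwj
      obtain ⟨k, hk⟩ := h.coset b v hv w hw
      have h1 := hd.tri (v : G) (c i) w
      have h2 := hd.tri (c i) (c j) w
      rw [hc i (hij.trans hj) j hj, hd.symm (c j), abs_sub_comm,
        abs_of_nonneg (sub_nonneg.2 (by exact_mod_cast hij))] at h2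
      have h3 := (hCE k 1 ⟨_, hk⟩).1
      have h4 : wdist (S : Set G) ((1 : E k) : G) ((v : G)⁻¹ * w) = wdist (S : Set G) (v : G) w := by
        simp [wdist]
      simp only [h4] at h3
      have h5 : wdist (TE k : Set (E k)) 1 ⟨_, hk⟩ ≤ ((A * (j - i) + A : ℕ) : ℝ) := by
        have hij' : (i : ℝ) ≤ j := by exact_mod_cast hij
        have x0 : wdist (S : Set G) (v : G) w ≤ 2 * R + (j - i) := by linarith
        have x1 : CE k * wdist (S : Set G) (v : G) w + CE k ≤ C * (2 * R + (j - i)) + C := by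
          have hnn := hd.nonneg (v : G) w
          have := hC k
          gcongr
        push_cast [Nat.cast_sub hij]
        have x2 : (C : ℝ) * (2 * R + (j - i)) + C ≤ (A : ℝ) * (j - i) + A := by
          have hA' : (A : ℝ) = C * (2 * R) + C + 1 := by rw [hA]; push_cast; ring
          have : (0 : ℝ) ≤ C * (2 * R) + 1 := by positivity
          rw [hA']; nlinarith
        linarith
      have h6 := (wdist_le_iff (hTE k) 1 ⟨_, hk⟩ _).1 h5
      have h7 := WL.map (S := (T : Set V)) (f k) (k := 1)
        (fun t ht => WL.of_mem (hTE' k t ht)) h6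
      rw [one_mul] at h7
      have h8 : f k (1⁻¹ * ⟨_, hk⟩) = v⁻¹ * w := by
        ext; simp [hf]
      rwa [h8] at h7
  refine ⟨T, ?_, 2 * A, fun v w => ?_⟩
  · rw [eq_top_iff]
    intro v _
    obtain ⟨m, hm, -⟩ := hd.geod ((1 : V) : G) v
    have := (key m 1 v hm).mem_closure
    simpa using this
  · obtain ⟨m, hm, -⟩ := hd.geod (v : G) w
    have := (key m v w hm).wordLength_le
    rw [wdist, hm]
    exact_mod_cast this

/-- The same control for an arbitrary finite generating set of the subgroup. -/
theorem exists_wdist_le_of_generating {S : Set G} {V : Subgroup G} {T : Finset V}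
    (hT : Subgroup.closure (T : Set V) = ⊤) {C : ℕ}
    (hC : ∀ v w : V, wdist (T : Set V) v w ≤ C * wdist S (v : G) (w : G)) {TV : Set V}
    (hTV : Subgroup.closure TV = ⊤) :
    ∃ C' : ℕ, ∀ v w : V, wdist TV v w ≤ C' * wdist S (v : G) (w : G) := by
  set k := T.sup fun t => wordLength TV t with hk
  refine ⟨k * C, fun v w => ?_⟩
  have := WL.map (S := TV) (MonoidHom.id V) (k := k)
    (fun t ht => (wl_iff hTV _ _).2 (Finset.le_sup (f := fun t : V => wordLength TV t) ht))
    (wl_wordLength hT (v⁻¹ * w))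
  have h2 : wdist TV v w ≤ k * wdist (T : Set V) v w := by
    rw [wdist, wdist]; exact_mod_cast this.wordLength_le
  push_cast
  rw [mul_assoc]
  exact h2.trans (by gcongr; exact hC v w)

end Chain

/-! ### Transfer of the Morse property from the vertex group to `G` -/

section Transfer

theorem AvoidPath.dist_le {X : Type*} {d : X → X → ℝ} (hd : GraphMetric d) {z x y : X} {ρ : ℝ}
    {n : ℕ} (h : AvoidPath d z ρ n x y) : d x y ≤ n := by
  induction h with
  | refl x hx => rw [hd.self]; simp
  | @step n x y w h h1 h2 ih =>
    have := hd.tri x y w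
    push_cast; linarith

variable {G : Type*} [Group G]

theorem AvoidPath.mul_left {S : Set G} {z x y : G} {ρ : ℝ} {n : ℕ} (g : G)
    (h : AvoidPath (wdist S) z ρ n x y) : AvoidPath (wdist S) (g * z) ρ n (g * x) (g * y) := by
  induction h with
  | refl x hx => exact .refl _ (by rwa [wdist_mul_left])
  | step h h1 h2 ih => exact ih.step (by rwa [wdist_mul_left]) (by rwa [wdist_mul_left])

set_option maxHeartbeats 800000 in
/-- Avoiding paths of `G` between points of the vertex group can be pushed into the vertex group.
Short excursions are replaced by geodesics of `V`, long ones, of length comparable with the scale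
`r`, by the avoiding paths provided by relative wideness of the edge groups. -/
theorem Splitting.exists_AP {S : Set G} (hS : Subgroup.closure S = ⊤) {V : Subgroup G}
    {β ι : Type*} [Finite ι] {hs P : β → Set G} {E : ι → Subgroup G} {R : ℕ}
    (h : Splitting S V hs P E R) {TV : Finset V} (hTV : Subgroup.closure (TV : Set V) = ⊤)
    {C : ℕ} (hC1 : 1 ≤ C) (hC : ∀ v w : V, wdist (TV : Set V) v w ≤ C * wdist S (v : G) (w : G))
    (hC' : ∀ v w : V, wdist S (v : G) (w : G) ≤ C * wdist (TV : Set V) v w)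
    (hE : ∀ i, RelativelyWide (TV : Set V) ((E i).subgroupOf V)) {M : ℕ} (hM : 1 ≤ M) {K : ℝ} :
    ∃ (M' : ℕ) (r₁ : ℝ), M ≤ M' ∧ ∀ r, r₁ ≤ r → ∀ a b z : V, wdist S (a : G) (z : G) ≤ K * r →
      AP (wdist S) M r (a : G) (b : G) (z : G) → AP (wdist (TV : Set V)) M' r a b z := by
  classical
  have := Fintype.ofFinite ι
  have hd := graphMetric_wdist hS
  have hdV := graphMetric_wdist hTV
  have hMr : (1 : ℝ) ≤ M := by exact_mod_cast hM
  have hCr : (1 : ℝ) ≤ C := by exact_mod_cast hC1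
  set c : ℝ := 1 / (4 * M * C) with hc
  have hcpos : 0 < c := by positivity
  have hcMC : c * (4 * M * C) = 1 := by rw [hc]; field_simp
  set K' : ℝ := C * (R + M + K) with hK'
  have hw := fun i => RelativelyWide.exists_AP (K := K') hTV (hE i) hcpos
  choose Mw hMw1 hMw using hw
  set W : ℕ := 1 + Finset.univ.sup Mw with hW
  have hMwW : ∀ i, (Mw i : ℝ) ≤ W := fun i => by
    have := Finset.le_sup (f := Mw) (Finset.mem_univ i)
    exact_mod_cast (by omega : Mw i ≤ W)
  have hW1 : (1 : ℝ) ≤ W := by exact_mod_cast (by omega : 1 ≤ W)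
  set A : ℕ := 8 * M * C * C * W + C * (2 * R) + C with hA
  set M' : ℕ := 2 * A * M + 4 * M * C + W with hM'
  have hM'r : (M' : ℝ) = 2 * A * M + 4 * M * C + W := by rw [hM']; push_cast; ring
  have hAr : (A : ℝ) = 8 * M * C * C * W + C * (2 * R) + C := by rw [hA]; push_cast; ring
  have hM'pos : (0 : ℝ) < M' := by rw [hM'r]; positivity
  refine ⟨M', 1 + W + 4 * C * R / c, by rw [hM']; nlinarith, ?_⟩
  rintro r hr a b z haz ⟨n, hn, hp⟩
  have hr1 : 1 ≤ r := by
    have : 0 ≤ 4 * C * R / c := by positivity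
    linarith
  have hrW : (W : ℝ) ≤ r := by
    have : 0 ≤ 4 * C * R / c := by positivity
    linarith
  have hrR : 4 * C * R ≤ c * r := by
    have : 4 * C * R / c ≤ r := by linarith
    rwa [div_le_iff₀ hcpos, mul_comm r] at this
  have hρ : r / M' ≤ c * r := by
    rw [div_le_iff₀ hM'pos]
    have : 1 ≤ c * M' := by
      rw [← hcMC]; gcongr; rw [hM'r]
      have : (0 : ℝ) ≤ 2 * A * M + W := by positivity
      linarith
    nlinarith
  have hR0 : (0 : ℝ) ≤ R := by positivity
  have hCR : (R : ℝ) ≤ C * R := by nlinarith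
  obtain ⟨g, g0, gn, hg, hgz⟩ := hp.exists_fun
  have hpre : ∀ i ≤ n, wdist S (g 0) (g i) ≤ i := by
    intro i
    induction i with
    | zero => intro _; rw [hd.self]; simp
    | succ i ih =>
      intro hi
      have h1 := ih (by omega)
      have h2 := hg i (by omega)
      have h3 := hd.tri (g 0) (g i) (g (i + 1))
      push_cast; linarith
  -- a point of `V` near the path is neither too close to `z` nor too far from it
  have hlow : ∀ i ≤ n, ∀ v : V, wdist S (v : G) (g i) ≤ R →
      2 * c * r ≤ wdist (TV : Set V) v z := by
    intro i hi v hv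
    have h1 := hgz i hi
    have h2 := hd.tri (g i) (v : G) z
    rw [hd.symm (g i) (v : G)] at h2
    have h3 := hC' v z
    have h4 : r / M = 4 * C * (c * r) := by
      rw [hc]; field_simp
    have h5 : 2 * C * (c * r) ≤ C * wdist (TV : Set V) v z := by
      have : c * r ≤ C * (c * r) := by
        have : 0 ≤ c * r := by positivity
        exact le_mul_of_one_le_left this hCr
      have : 0 ≤ c * r := by positivity
      rw [h4] at h1
      linarith
    have h6 : (C : ℝ) * (2 * c * r) ≤ C * wdist (TV : Set V) v z := by linarith
    exact le_of_mul_le_mul_left h6 (by linarith)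
  have hup : ∀ i ≤ n, ∀ v : V, wdist S (v : G) (g i) ≤ R →
      wdist (TV : Set V) v z ≤ K' * r := by
    intro i hi v hv
    have h1 := hd.tri (v : G) (g i) z
    have h2 := hd.tri (g i) (g 0) z
    have h3 := hpre i hi
    rw [hd.symm] at h3
    rw [g0] at h2 h3
    have h4 : (i : ℝ) ≤ n := by exact_mod_cast hi
    refine (hC v z).trans ?_
    have h5 : (R : ℝ) ≤ R * r := le_mul_of_one_le_right hR0 hr1
    have h6 : wdist S (v : G) z ≤ (R + M + K) * r := by linarith
    rw [hK', mul_assoc]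
    gcongr
  have h0 : g 0 ∈ V := g0 ▸ a.2
  have hnV : g n ∈ V := gn ▸ b.2
  have hgeo : ∀ i ≤ n, ∀ v w : V, wdist S (v : G) (g i) ≤ R →
      wdist (TV : Set V) v w ≤ c * r → ∀ k : ℕ, wdist (TV : Set V) v w ≤ k →
      ∃ k' ≤ k, AvoidPath (wdist (TV : Set V)) z (r / M') k' v w := by
    intro i hi v w hv hvw k hk
    obtain ⟨k', hk', -⟩ := hdV.geod v w
    refine ⟨k', by rw [hk'] at hk; exact_mod_cast hk, AvoidPath.geodesic hdV v w hk' ?_⟩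
    have := hlow i hi v hv
    linarith
  have key := h.chain hd hg h0 hnV
    (Good := fun k v w => v = w ∨ ∃ k' ≤ k, AvoidPath (wdist (TV : Set V)) z (r / M') k' v w)
    (fun _ _ => Or.inl rfl) ?_ ?_ (A := A) ?_ ?_
  · have ha : (⟨g 0, h0⟩ : V) = a := Subtype.ext g0
    have hb : (⟨g n, hnV⟩ : V) = b := Subtype.ext gn
    rw [ha, hb] at key
    rcases key with rfl | ⟨k, hk, hk'⟩
    · refine ⟨0, by push_cast; positivity, AvoidPath.refl _ ?_⟩
      have := hlow 0 (Nat.zero_le _) a (by rw [g0, hd.self]; exact hR0)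
      have : 0 ≤ c * r := by positivity
      linarith
    · refine ⟨k, ?_, hk'⟩
      have h1 : (k : ℝ) ≤ 2 * A * n := by exact_mod_cast hk
      have h2 : (2 * A * n : ℝ) ≤ 2 * A * (M * r) := by gcongr
      have h3 : (2 * A * M : ℝ) ≤ M' := by
        have : (0 : ℝ) ≤ 4 * M * C + W := by positivity
        linarith
      have h4 : (2 * A * M : ℝ) * r ≤ M' * r := by gcongr
      linarith
  · rintro k k' u v w (rfl | ⟨l, hl, h1⟩) (rfl | ⟨l', hl', h2⟩)
    · exact Or.inl rfl
    · exact Or.inr ⟨l', by omega, h2⟩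
    · exact Or.inr ⟨l, by omega, h1⟩
    · exact Or.inr ⟨l + l', by omega, h1.trans h2⟩
  · rintro k k' v w hkk (rfl | ⟨l, hl, h1⟩)
    · exact Or.inl rfl
    · exact Or.inr ⟨l, by omega, h1⟩
  · intro i hi v w hv hw
    have h1 := hd.tri (v : G) (g i) w
    rw [hd.symm (g i)] at h1
    have h2 : wdist (TV : Set V) v w ≤ C * (2 * R) :=
      (hC v w).trans (by gcongr; linarith)
    refine Or.inr (hgeo i hi v w hv (by linarith) A ?_)
    rw [hAr]
    have : (0 : ℝ) ≤ 8 * M * C * C * W := by positivity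
    linarith
  · intro i j hij hj b' v w hv hw hvi hwj
    right
    have hij' : (i : ℝ) ≤ j := by exact_mod_cast hij
    have hgij : wdist S (g i) (g j) ≤ (j : ℝ) - i := by
      have : AvoidPath (wdist S) (z : G) (r / M) (j - i) (g i) (g j) := AvoidPath.of_fun hij
        (fun k _ hk => hg k (by omega)) (fun k _ hk => hgz k (by omega))
      have := this.dist_le hd
      rwa [Nat.cast_sub hij] at this
    have h1 := hd.tri (v : G) (g i) w
    have h2 := hd.tri (g i) (g j) w
    rw [hd.symm (g j)] at h2
    have h3 : wdist (TV : Set V) v w ≤ C * (2 * R + (j - i)) :=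
      (hC v w).trans (by gcongr; linarith)
    have hl : (0 : ℝ) ≤ j - i := by linarith
    have hcast : ((A * (j - i) + A : ℕ) : ℝ) = A * (j - i) + A := by
      push_cast [Nat.cast_sub hij]; ring
    by_cases hsm : C * (2 * R + ((j : ℝ) - i)) ≤ c * r
    · refine hgeo i (hij.trans hj) v w hvi (h3.trans hsm) _ ?_
      rw [hcast, hAr]
      have : (0 : ℝ) ≤ 8 * M * C * C * W := by positivity
      have : (0 : ℝ) ≤ C * (2 * R) := by positivity
      nlinarith
    · push Not at hsm
      obtain ⟨e, he⟩ := h.coset b' v hv w hw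
      have hx := hMw e r ((hMwW e).trans hrW) 1 (one_mem _) (v⁻¹ * w)
        (by rw [Subgroup.mem_subgroupOf]; simpa using he) (v⁻¹ * z)
      have t1 : wdist (TV : Set V) 1 (v⁻¹ * z) = wdist (TV : Set V) v z := by simp [wdist]
      have t2 : wdist (TV : Set V) (v⁻¹ * w) (v⁻¹ * z) = wdist (TV : Set V) w z :=
        wdist_mul_left _ _ _ _
      rw [t1, t2] at hx
      have hcr : 0 ≤ c * r := by positivity
      obtain ⟨k, hk, hp'⟩ := hx (by linarith [hlow i (hij.trans hj) v hvi])
        (hup i (hij.trans hj) v hvi) (by linarith [hlow j hj w hwj]) (hup j hj w hwj)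
      have hp2 := hp'.mul_left v
      rw [mul_inv_cancel_left, mul_inv_cancel_left, mul_one] at hp2
      refine ⟨k, ?_, hp2.mono ?_⟩
      · have : (k : ℝ) ≤ ((A * (j - i) + A : ℕ) : ℝ) := by
          rw [hcast, hAr]
          have u1 : c * r ≤ 2 * C * (j - i) := by nlinarith
          have u2 : r ≤ 8 * M * C * C * (j - i) := by
            have : c * r * (4 * M * C) ≤ 2 * C * (j - i) * (4 * M * C) := by gcongr
            have h' : c * r * (4 * M * C) = r := by rw [mul_right_comm, hcMC, one_mul]
            rw [h'] at this; linarith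
          have u3 : (Mw e : ℝ) * r ≤ W * r :=
            mul_le_mul_of_nonneg_right (hMwW e) (by linarith)
          have u4 : (W : ℝ) * r ≤ W * (8 * M * C * C * (j - i)) := by gcongr
          have u5 : 0 ≤ (C * (2 * R) + C : ℝ) * (j - i) := by positivity
          have u6 : (0 : ℝ) ≤ 8 * M * C * C * W + C * (2 * R) + C := by positivity
          linarith
        exact_mod_cast this
      · have : (1 : ℝ) ≤ Mw e := by exact_mod_cast hMw1 e
        refine div_le_div_of_nonneg_left (by linarith) (by linarith) ((hMwW e).trans ?_)
        rw [hM'r]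
        have : (0 : ℝ) ≤ 2 * A * M + 4 * M * C := by positivity
        linarith

/-- Geodesic rays of the vertex group which are `N`-Morse in the vertex group are `N'`-Morse in `G`,
with `N'` depending only on `N`. -/
theorem Splitting.exists_morse {S : Set G} (hS : Subgroup.closure S = ⊤) {V : Subgroup G}
    {β ι : Type*} [Finite ι] {hs P : β → Set G} {E : ι → Subgroup G} {R : ℕ}
    (h : Splitting S V hs P E R) {TV : Finset V} (hTV : Subgroup.closure (TV : Set V) = ⊤)
    {C : ℕ} (hC1 : 1 ≤ C) (hC : ∀ v w : V, wdist (TV : Set V) v w ≤ C * wdist S (v : G) (w : G))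
    (hC' : ∀ v w : V, wdist S (v : G) (w : G) ≤ C * wdist (TV : Set V) v w)
    (hE : ∀ i, RelativelyWide (TV : Set V) ((E i).subgroupOf V)) (N : ℝ → ℝ) :
    ∃ N' : ℝ → ℝ, ∀ γ : ℕ → V, IsGeodSeq (wdist (TV : Set V)) γ →
      MorseSet (wdist (TV : Set V)) N (range γ) →
      MorseSet (wdist S) N' (range fun n => (γ n : G)) := by
  have hd := graphMetric_wdist hS
  have hdV := graphMetric_wdist hTV
  have hCr : (1 : ℝ) ≤ C := by exact_mod_cast hC1
  obtain ⟨RV, hRV⟩ := exists_diverges_of_morse hdV (le_refl (1 : ℝ)) N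
  have hT : ∀ M : ℕ, ∃ (M' : ℕ) (r₁ : ℝ), M ≤ M' ∧ (M = 0 → 0 < r₁) ∧ (1 ≤ M → ∀ r, r₁ ≤ r →
      ∀ a b z : V, wdist S (a : G) (z : G) ≤ (C * C * M : ℝ) * r →
      AP (wdist S) M r (a : G) (b : G) (z : G) → AP (wdist (TV : Set V)) M' r a b z) := by
    intro M
    rcases Nat.eq_zero_or_pos M with rfl | hM
    · exact ⟨0, 1, le_rfl, fun _ => one_pos, fun h => absurd h (by omega)⟩
    · obtain ⟨M', r₁, h1, h2⟩ := h.exists_AP hS hTV hC1 hC hC' hE hM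
        (K := C * C * M)
      exact ⟨M', r₁, h1, fun h => by omega, fun _ => h2⟩
  choose M' r₁ hMM hr₁ hAP using hT
  obtain ⟨N', hN'⟩ := exists_morse_of_diverges hd (C₀ := C) hCr
    (fun M => max (r₁ M) (RV (M' M)))
  refine ⟨N', fun γ hγ hm => hN' _ ?_ ?_⟩
  · intro i _ j _
    have h1 := hC (γ i) (γ j)
    have h2 := hC' (γ i) (γ j)
    rw [hγ] at h1 h2
    refine ⟨?_, by linarith⟩
    have : |(i : ℝ) - j| / C ≤ wdist S (γ i : G) (γ j : G) := by
      rw [div_le_iff₀ (by linarith)]; linarith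
    linarith
  · have hQ : QGOn (wdist (TV : Set V)) 1 univ γ := fun i _ j _ => by
      rw [hγ]; constructor <;> linarith
    intro M r hr t₁ t t₂ h1 h2 h3 h4 hap
    have hr' : r₁ M ≤ r := (le_max_left _ _).trans hr
    rcases Nat.eq_zero_or_pos M with rfl | hM
    · have := hr₁ 0 rfl
      simp only [Nat.cast_zero, zero_mul] at h3
      linarith
    · have b1 : (t₁ : ℝ) ≤ t := by exact_mod_cast h1
      have b2 : (t : ℝ) ≤ t₂ := by exact_mod_cast h2
      refine hRV γ hQ hm (M' M) r ((le_max_right _ _).trans hr) t₁ t t₂ h1 h2 ?_ ?_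
        (hAP M hM r hr' _ _ _ ?_ hap)
      · exact h3.trans (by gcongr; exact hMM M)
      · exact h4.trans (by gcongr; exact hMM M)
      · obtain ⟨n, hn, hp⟩ := hap
        have c1 := hp.dist_le hd
        have c2 := hC (γ t₁) (γ t₂)
        have c3 := hC' (γ t₁) (γ t)
        rw [hγ, abs_sub_comm, abs_of_nonneg (by linarith)] at c2 c3
        have c4 : (C : ℝ) * wdist S (γ t₁ : G) (γ t₂ : G) ≤ C * (M * r) := by
          gcongr; linarith
        have c5 : (C : ℝ) * ((t : ℝ) - t₁) ≤ C * (C * (M * r)) := by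
          gcongr; linarith
        calc _ ≤ _ := c3
          _ ≤ _ := c5
          _ = _ := by ring

end Transfer

/-! ### Morse rays, fellow travelling and limits -/

section Rays

variable {X : Type*} {d : X → X → ℝ}

theorem BddHD.symm {A B : Set X} (h : BddHD d A B) : BddHD d B A := by
  obtain ⟨r, h1, h2⟩ := h
  exact ⟨r, h2, h1⟩

theorem BddHD.trans (hd : GraphMetric d) {A B D : Set X} (h : BddHD d A B) (h' : BddHD d B D) :
    BddHD d A D := by
  obtain ⟨r, h1, h2⟩ := h
  obtain ⟨r', h3, h4⟩ := h'
  refine ⟨r + r', fun a ha => ?_, fun c hc => ?_⟩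
  · obtain ⟨b, hb, hab⟩ := h1 a ha
    obtain ⟨c, hc, hbc⟩ := h3 b hb
    exact ⟨c, hc, (hd.tri a b c).trans (by linarith)⟩
  · obtain ⟨b, hb, hab⟩ := h4 c hc
    obtain ⟨a, ha, hbc⟩ := h2 b hb
    exact ⟨a, ha, (hd.tri c b a).trans (by linarith)⟩

theorem BddHD.refl (hd : GraphMetric d) (A : Set X) : BddHD d A A :=
  ⟨0, fun a ha => ⟨a, ha, (hd.self a).le⟩, fun a ha => ⟨a, ha, (hd.self a).le⟩⟩

/-- The images of two sequences are at Hausdorff distance at most `κ`. -/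
def Close (d : X → X → ℝ) (κ : ℝ) (γ β : ℕ → X) : Prop :=
  (∀ i, ∃ j, d (γ i) (β j) ≤ κ) ∧ ∀ j, ∃ i, d (β j) (γ i) ≤ κ

theorem Close.bddHD {κ : ℝ} {γ β : ℕ → X} (h : Close d κ γ β) : BddHD d (range γ) (range β) := by
  refine ⟨κ, ?_, ?_⟩
  · rintro _ ⟨i, rfl⟩
    obtain ⟨j, hj⟩ := h.1 i
    exact ⟨_, ⟨j, rfl⟩, hj⟩
  · rintro _ ⟨j, rfl⟩
    obtain ⟨i, hi⟩ := h.2 j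
    exact ⟨_, ⟨i, rfl⟩, hi⟩

theorem Close.symm {κ : ℝ} {γ β : ℕ → X} (h : Close d κ γ β) : Close d κ β γ := ⟨h.2, h.1⟩

theorem BddHD.close {γ β : ℕ → X} (h : BddHD d (range γ) (range β)) :
    ∃ κ, Close d κ γ β := by
  obtain ⟨r, h1, h2⟩ := h
  refine ⟨r, fun i => ?_, fun j => ?_⟩
  · obtain ⟨_, ⟨j, rfl⟩, hj⟩ := h1 _ ⟨i, rfl⟩
    exact ⟨j, hj⟩
  · obtain ⟨_, ⟨i, rfl⟩, hi⟩ := h2 _ ⟨j, rfl⟩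
    exact ⟨i, hi⟩

/-- Being Morse is invariant, with control of the gauge, under bounded Hausdorff perturbation:
move the endpoints of a quasi-geodesic from one set to the other. -/
theorem MorseSet.of_close (hd : GraphMetric d) {N : ℝ → ℝ} {κ : ℝ} (hκ : 0 ≤ κ) {γ β : ℕ → X}
    (h : Close d κ γ β) (hm : MorseSet d N (range γ)) :
    MorseSet d (fun C => N (C + 2 * κ) + 2 * κ) (range β) := by
  classical
  rintro C hC a b hab α hα ⟨ia, hia⟩ ⟨ib, hib⟩ t ht
  obtain ⟨ja, hja⟩ := h.2 ia
  obtain ⟨jb, hjb⟩ := h.2 ib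
  rw [hia] at hja
  rw [hib] at hjb
  set α' : ℝ → X := fun t => if t = a then γ ja else if t = b then γ jb else α t with hα'
  have hnear : ∀ t, d (α t) (α' t) ≤ κ := by
    intro t
    simp only [hα']
    split_ifs with h1 h2
    · rwa [h1]
    · rwa [h2]
    · rwa [hd.self]
  have hQ : IsQG d (C + 2 * κ) (Icc a b) α' := by
    refine ⟨by linarith, fun s hs t ht => ?_⟩
    obtain ⟨h1, h2⟩ := hα.2 s hs t ht
    have n1 := hnear s
    have n2 := hnear t
    have t1 := hd.tri (α' s) (α s) (α' t)
    have t2 := hd.tri (α s) (α t) (α' t)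
    have t3 := hd.tri (α s) (α' s) (α t)
    have t4 := hd.tri (α' s) (α' t) (α t)
    rw [hd.symm (α' s) (α s)] at t1
    rw [hd.symm (α' t) (α t)] at t4
    have habs := abs_nonneg (s - t)
    constructor
    · have : |s - t| / (C + 2 * κ) ≤ |s - t| / C := by
        apply div_le_div_of_nonneg_left habs <;> linarith
      linarith
    · nlinarith
  have hb : α' b ∈ range γ := by
    by_cases hab' : b = a
    · simp [hα', hab']
    · simp [hα', hab']
  obtain ⟨_, ⟨i, rfl⟩, hi⟩ := hm _ (by linarith) a b hab α' hQ ⟨ja, by simp [hα']⟩ hb t ht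
  obtain ⟨j, hj⟩ := h.1 i
  have n1 := hnear t
  have t1 := hd.tri (α t) (α' t) (β j)
  have t2 := hd.tri (α' t) (γ i) (β j)
  exact ⟨_, ⟨j, rfl⟩, by linarith⟩

/-- Along an ultrafilter, a choice among finitely many possibilities is eventually constant. -/
theorem eventually_const_of_finite {J Y : Type*} (ω : Ultrafilter J) {F : Set Y} (hF : F.Finite)
    {p : J → Y → Prop} (h : ∀ᶠ k in ω, ∃ y ∈ F, p k y) : ∃ y ∈ F, ∀ᶠ k in ω, p k y := by
  have : (⋃ y ∈ F, {k | p k y}) ∈ ω := by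
    filter_upwards [h] with k hk
    simpa using hk
  exact (Ultrafilter.finite_biUnion_mem_iff hF).1 this

/-- If the quasi-geodesics `b k`, issued from `o`, converge pointwise to `β` along `ω` and almost
all of them pass near `x`, then so does `β`. -/
theorem exists_near_limit (hd : GraphMetric d) {J : Type*} (ω : Ultrafilter J) {C κ : ℝ} (hC : 1 ≤ C)
    {o : X} {b : J → ℕ → X} {I : J → Set ℕ} (h0 : ∀ᶠ k in ω, b k 0 = o ∧ 0 ∈ I k)
    (hb : ∀ᶠ k in ω, QGOn d C (I k) (b k)) {β : ℕ → X} (hβ : ∀ i, ∀ᶠ k in ω, b k i = β i) {x : X}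
    (hx : ∀ᶠ k in ω, ∃ l ∈ I k, d x (b k l) ≤ κ) : ∃ l, d x (β l) ≤ κ := by
  obtain ⟨B, hB⟩ := exists_nat_ge (C * (d o x + κ + C))
  obtain ⟨l, -, hl⟩ := eventually_const_of_finite ω (finite_Iic B)
    (p := fun k l => d x (b k l) ≤ κ) (by
      filter_upwards [h0, hb, hx] with k h0 hb ⟨l, hl, hxl⟩
      refine ⟨l, ?_, hxl⟩
      have h1 := hb.le_mul hC h0.2 hl
      rw [h0.1] at h1
      have h2 := hd.tri o x (b k l)
      have h3 : C * (d o (b k l) + C) ≤ C * (d o x + κ + C) := by gcongr; linarith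
      have h4 : ((l : ℕ) : ℝ) ≤ B := by
        simp only [Nat.cast_zero, zero_sub, abs_neg, Nat.abs_cast] at h1
        linarith
      exact_mod_cast h4)
  obtain ⟨k, h1, h2⟩ := (hl.and (hβ l)).exists
  exact ⟨l, h2 ▸ h1⟩

theorem IsGeodSeq.qgOn {β : ℕ → X} (h : IsGeodSeq d β) {C : ℝ} (hC : 1 ≤ C) (I : Set ℕ) :
    QGOn d C I β := by
  intro i _ j _
  rw [h]
  have := abs_nonneg ((i : ℝ) - j)
  refine ⟨?_, by nlinarith⟩
  have := div_le_self this hC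
  linarith

/-- Pointwise limits of geodesic rays. -/
theorem exists_limit (hfin : ∀ x (n : ℕ), {y | d x y ≤ n}.Finite) {J : Type*}
    (ω : Ultrafilter J) {o : X} {b : J → ℕ → X} (h0 : ∀ k, b k 0 = o)
    (hb : ∀ i j, ∀ᶠ k in ω, d (b k i) (b k j) = |(i : ℝ) - j|) :
    ∃ β : ℕ → X, β 0 = o ∧ IsGeodSeq d β ∧ ∀ i, ∀ᶠ k in ω, b k i = β i := by
  have : ∀ i, ∃ y, ∀ᶠ k in ω, b k i = y := by
    intro i
    obtain ⟨y, -, hy⟩ := eventually_const_of_finite ω (hfin o i) (p := fun k y => b k i = y) (by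
      filter_upwards [hb 0 i] with k hk
      refine ⟨_, ?_, rfl⟩
      rw [← h0 k, hk]; simp)
    exact ⟨y, hy⟩
  choose β hβ using this
  refine ⟨β, ?_, ?_, hβ⟩
  · obtain ⟨k, hk⟩ := (hβ 0).exists
    rw [← hk, h0]
  · intro i j
    obtain ⟨k, h1, h2, h3⟩ := ((hβ i).and ((hβ j).and (hb i j))).exists
    rw [← h1, ← h2, h3]

/-- A pointwise limit of `N`-Morse geodesic rays is `N`-Morse. -/
theorem MorseSet.limit (hd : GraphMetric d) {J : Type*} (ω : Ultrafilter J) {N : ℝ → ℝ} {o : X}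
    {b : J → ℕ → X} (h0 : ∀ k, b k 0 = o) (hb : ∀ᶠ k in ω, IsGeodSeq d (b k))
    (hm : ∀ᶠ k in ω, MorseSet d N (range (b k))) {β : ℕ → X}
    (hβ : ∀ i, ∀ᶠ k in ω, b k i = β i) : MorseSet d N (range β) := by
  rintro C hC a b' hab α hα ⟨i, hi⟩ ⟨j, hj⟩ t ht
  obtain ⟨l, hl⟩ := exists_near_limit hd ω le_rfl (I := fun _ => univ) (κ := N C) (x := α t)
    (Eventually.of_forall fun k => ⟨h0 k, mem_univ _⟩)
    (by filter_upwards [hb] with k hk using hk.qgOn le_rfl _) hβ (by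
      filter_upwards [hm, hβ i, hβ j] with k hk h1 h2
      obtain ⟨_, ⟨l, rfl⟩, hl⟩ := hk C hC a b' hab α hα ⟨i, h1.trans hi⟩ ⟨j, h2.trans hj⟩ t ht
      exact ⟨l, mem_univ _, hl⟩)
  exact ⟨_, ⟨l, rfl⟩, hl⟩

/-- Closeness passes to pointwise limits. -/
theorem Close.limit (hd : GraphMetric d) {J : Type*} (ω : Ultrafilter J) {C κ : ℝ} (hC : 1 ≤ C)
    {o : X} {b c : J → ℕ → X} (hb0 : ∀ k, b k 0 = o) (hc0 : ∀ k, c k 0 = o)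
    (hb : ∀ᶠ k in ω, QGOn d C univ (b k)) (hc : ∀ᶠ k in ω, QGOn d C univ (c k))
    (hbc : ∀ᶠ k in ω, Close d κ (b k) (c k)) {β γ : ℕ → X} (hβ : ∀ i, ∀ᶠ k in ω, b k i = β i)
    (hγ : ∀ i, ∀ᶠ k in ω, c k i = γ i) : Close d κ β γ := by
  constructor
  · intro i
    refine exists_near_limit hd ω hC (I := fun _ => univ)
      (Eventually.of_forall fun k => ⟨hc0 k, mem_univ _⟩) hc hγ ?_
    filter_upwards [hβ i, hbc] with k h1 h2
    obtain ⟨j, hj⟩ := h2.1 i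
    exact ⟨j, mem_univ _, h1 ▸ hj⟩
  · intro i
    refine exists_near_limit hd ω hC (I := fun _ => univ)
      (Eventually.of_forall fun k => ⟨hb0 k, mem_univ _⟩) hb hβ ?_
    filter_upwards [hγ i, hbc] with k h1 h2
    obtain ⟨j, hj⟩ := h2.2 i
    exact ⟨j, mem_univ _, h1 ▸ hj⟩

/-- A Morse quasi-geodesic ray is uniformly close to a geodesic ray with the same origin, obtained
as a limit of geodesics from the origin to points further and further along the ray. -/
theorem exists_geodesic_close (hd : GraphMetric d) (hfin : ∀ x (n : ℕ), {y | d x y ≤ n}.Finite)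
    {C : ℝ} (hC : 1 ≤ C) (N : ℝ → ℝ) :
    ∃ κ : ℝ, 0 ≤ κ ∧ ∀ γ : ℕ → X, QGOn d C univ γ → MorseSet d N (range γ) →
      ∃ β : ℕ → X, β 0 = γ 0 ∧ IsGeodSeq d β ∧ Close d κ γ β := by
  set D : ℝ := max (N 2) 0 with hD
  have hD0 : 0 ≤ D := le_max_right _ _
  set κ : ℝ := D + C * (C * (2 * D + 1 + C)) + C with hκ
  have hDκ : D ≤ κ := by
    have : 0 ≤ C * (C * (2 * D + 1 + C)) := by positivity
    linarith
  refine ⟨κ, by linarith, fun γ hγ hm => ?_⟩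
  choose n hn c c0 cn hc using fun k => hd.geod (γ 0) (γ k)
  have hnear : ∀ k, ∀ i ≤ n k, ∃ j, d (c k i) (γ j) ≤ D := by
    intro k i hi
    obtain ⟨_, ⟨j, rfl⟩, hj⟩ := hm.discrete le_rfl (QGOn.of_geodSeg (hc k))
      (c0 k ▸ mem_range_self 0) (cn k ▸ mem_range_self k) hi
    rw [mul_one] at hj
    exact ⟨j, hj.trans (le_max_left _ _)⟩
  set ω : Ultrafilter ℕ := hyperfilter ℕ with hω
  have hge : ∀ t : ℕ, ∀ᶠ k in (ω : Filter ℕ), t ≤ k := fun t =>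
    Nat.hyperfilter_le_atTop (eventually_ge_atTop t)
  have hnlarge : ∀ m : ℕ, ∀ᶠ k in (ω : Filter ℕ), m ≤ n k := by
    intro m
    obtain ⟨t, ht⟩ := exists_nat_ge (C * (m + C))
    filter_upwards [hge t] with k hk
    have h1 := hγ.le_mul hC (mem_univ 0) (mem_univ k)
    simp only [Nat.cast_zero, zero_sub, abs_neg, Nat.abs_cast] at h1
    rw [hn k] at h1
    have h2 : (t : ℝ) ≤ k := by exact_mod_cast hk
    have h3 : C * (m + C) ≤ C * (n k + C) := by linarith
    have h4 : (m : ℝ) + C ≤ n k + C := le_of_mul_le_mul_left h3 (by linarith)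
    have h5 : (m : ℝ) ≤ n k := by linarith
    exact_mod_cast h5
  obtain ⟨β, β0, hβ, hlim⟩ := exists_limit hfin ω c0 (fun i j => by
    filter_upwards [hnlarge i, hnlarge j] with k h1 h2 using hc k i h1 j h2)
  refine ⟨β, β0, hβ, fun t => ?_, fun i => ?_⟩
  · refine exists_near_limit hd ω le_rfl (I := fun k => Iic (n k)) (o := γ 0)
      (Eventually.of_forall fun k => ⟨c0 k, Nat.zero_le _⟩)
      (Eventually.of_forall fun k => QGOn.of_geodSeg (hc k)) hlim ?_
    filter_upwards [hge t] with k hk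
    obtain ⟨i, hi, h⟩ := exists_near_of_crossing hd hC zero_le_one hγ (P := c k) (n := n k) (D := D)
      (t₁ := 0) (t := t) (t₂ := k)
      (fun i hi => by rw [hc k i hi.le (i + 1) hi]; push_cast; simp)
      (fun i hi => by
        obtain ⟨j, hj⟩ := hnear k i hi
        exact ⟨j, mem_univ _, hj⟩)
      (mem_univ _) (mem_univ _) (mem_univ _) (Nat.zero_le _) hk
      (by rw [c0, hd.self]; exact hD0) (by rw [cn, hd.self]; exact hD0)
    exact ⟨i, hi, by rwa [hd.symm]⟩
  · obtain ⟨k, h1, h2⟩ := ((hlim i).and (hnlarge i)).exists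
    obtain ⟨j, hj⟩ := hnear k i h2
    exact ⟨j, h1 ▸ hj.trans hDκ⟩

/-- A quasi-geodesic ray at finite Hausdorff distance from a Morse geodesic ray with the same origin
is uniformly close to it.  To an initial segment `γ [0, m]` one adds a geodesic from `γ m` to a
point `β q` of the geodesic ray, where `γ m` is a point of `γ` closest to `β q`: the result is a
quasi-geodesic with endpoints on the geodesic ray. -/
theorem exists_close_of_bddHD (hd : GraphMetric d) {C : ℝ} (hC : 1 ≤ C) (N : ℝ → ℝ) :
    ∃ κ : ℝ, 0 ≤ κ ∧ ∀ γ β : ℕ → X, QGOn d C univ γ → IsGeodSeq d β → γ 0 = β 0 →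
      MorseSet d N (range β) → BddHD d (range γ) (range β) → Close d κ γ β := by
  set D : ℝ := max (N (2 * (3 * C))) 0 with hD
  have hD0 : 0 ≤ D := le_max_right _ _
  set κ : ℝ := D + 1 * (1 * (2 * D + 2 * C + 1)) + 1 with hκ
  have hDκ : D ≤ κ := by linarith
  refine ⟨κ, by linarith, fun γ β hγ hβ h0 hm hγβ => ?_⟩
  obtain ⟨r, hr, -⟩ := hγβ.close
  have hnear : ∀ t, ∃ j, d (γ t) (β j) ≤ D := by
    intro t
    obtain ⟨m₀, hm₀⟩ := exists_nat_ge (t + C * (2 * r + C))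
    obtain ⟨q, hq⟩ := hr m₀
    obtain ⟨m, hmin⟩ : ∃ m, ∀ s, d (γ m) (β q) ≤ d (γ s) (β q) := by
      classical
      have hex : ∃ l : ℕ, ∃ s, d (γ s) (β q) = l :=
        let ⟨l, hl, _⟩ := hd.geod (γ 0) (β q); ⟨l, 0, hl⟩
      obtain ⟨m, hm⟩ := Nat.find_spec hex
      refine ⟨m, fun s => ?_⟩
      obtain ⟨l, hl, -⟩ := hd.geod (γ s) (β q)
      rw [hm, hl]
      exact_mod_cast Nat.find_min' hex ⟨s, hl⟩
    have htm : t ≤ m := by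
      have h1 := hγ.le_mul hC (mem_univ m₀) (mem_univ m)
      have h2 := hd.tri (γ m₀) (β q) (γ m)
      have h3 := hmin m₀
      rw [hd.symm (γ m)] at h3
      have h4 : C * (d (γ m₀) (γ m) + C) ≤ C * (2 * r + C) := by gcongr; linarith
      have h5 := le_abs_self ((m₀ : ℝ) - m)
      have h6 : (t : ℝ) ≤ m := by linarith
      exact_mod_cast h6
    obtain ⟨l, hl, c, c0, cl, hc⟩ := hd.geod (γ m) (β q)
    set Q : ℕ → X := fun i => if i ≤ m then γ i else c (i - m) with hQ
    have hQγ : ∀ i ≤ m, Q i = γ i := fun i hi => by simp [hQ, hi]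
    have hQc : ∀ i, m ≤ i → Q i = c (i - m) := fun i hi => by
      rcases hi.eq_or_lt with rfl | hi
      · simp [hQ, c0]
      · simp [hQ, hi]
    have hQG : QGOn d (3 * C) (Iic (m + l)) Q := by
      refine QGOn.of_le hd fun i hi j hj hij => ?_
      have hij' : (0 : ℝ) ≤ (j : ℝ) - i := sub_nonneg.2 (by exact_mod_cast hij)
      have hdiv : ((j : ℝ) - i) / (3 * C) ≤ ((j : ℝ) - i) / C := by
        apply div_le_div_of_nonneg_left hij' <;> linarith
      rcases le_total j m with hjm | hjm
      · rw [hQγ i (hij.trans hjm), hQγ j hjm]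
        obtain ⟨h1, h2⟩ := hγ i (mem_univ _) j (mem_univ _)
        rw [abs_sub_comm, abs_of_nonneg hij'] at h1 h2
        exact ⟨by linarith, by nlinarith⟩
      · have hjl : j - m ≤ l := by rw [mem_Iic] at hj; omega
        rcases le_total m i with him | him
        · rw [hQc i him, hQc j hjm, hc _ (by omega) _ hjl, Nat.cast_sub him, Nat.cast_sub hjm,
            sub_sub_sub_cancel_right, abs_sub_comm, abs_of_nonneg hij']
          have := div_le_self hij' hC
          exact ⟨by linarith, by nlinarith⟩
        · rw [hQγ i him, hQc j hjm]
          obtain ⟨h1, h2⟩ := hγ i (mem_univ _) m (mem_univ _)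
          have hmi : (0 : ℝ) ≤ (m : ℝ) - i := sub_nonneg.2 (by exact_mod_cast him)
          rw [abs_sub_comm, abs_of_nonneg hmi] at h1 h2
          have e1 : d (γ m) (c (j - m)) = (j : ℝ) - m := by
            rw [← c0, hc 0 (Nat.zero_le _) _ hjl, Nat.cast_sub hjm, abs_sub_comm, Nat.cast_zero,
              sub_zero, abs_of_nonneg (sub_nonneg.2 (by exact_mod_cast hjm))]
          have e2 : d (c (j - m)) (β q) = l - ((j : ℝ) - m) := by
            rw [← cl, hc _ hjl _ le_rfl, Nat.cast_sub hjm, abs_sub_comm, abs_of_nonneg]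
            rw [sub_nonneg, ← Nat.cast_sub hjm]; exact_mod_cast hjl
          have t1 := hd.tri (γ i) (c (j - m)) (β q)
          have t2 := hd.tri (γ i) (c (j - m)) (γ m)
          have t3 := hd.tri (γ i) (γ m) (c (j - m))
          rw [hd.symm (c (j - m)) (γ m)] at t2
          have t4 := hmin i
          have hjm' : (0 : ℝ) ≤ (j : ℝ) - m := sub_nonneg.2 (by exact_mod_cast hjm)
          constructor
          · have s1 : ((j : ℝ) - i) / (3 * C) = (((m : ℝ) - i) / C + ((j : ℝ) - m) / C) / 3 := by
              field_simp; ring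
            have s2 := div_le_self hjm' hC
            rw [s1]; linarith
          · nlinarith
    obtain ⟨_, ⟨j, rfl⟩, hj⟩ := hm.discrete (by linarith) hQG
      (by rw [hQγ 0 (Nat.zero_le _), h0]; exact mem_range_self 0)
      (by rw [hQc _ (by omega), Nat.add_sub_cancel_left, cl]; exact mem_range_self q)
      (show t ≤ m + l by omega)
    rw [hQγ t htm] at hj
    exact ⟨j, hj.trans (le_max_left _ _)⟩
  refine ⟨fun t => (hnear t).imp fun j hj => hj.trans hDκ, fun j => ?_⟩
  obtain ⟨m, hm'⟩ := exists_nat_ge (C * (j + D + C))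
  obtain ⟨q, hq⟩ := hnear m
  have hjq : j ≤ q := by
    have h1 := hγ.le_mul hC (mem_univ 0) (mem_univ m)
    simp only [Nat.cast_zero, zero_sub, abs_neg, Nat.abs_cast] at h1
    have h3 : C * (j + D + C) ≤ C * (d (γ 0) (γ m) + C) := by linarith
    have h4 : (j : ℝ) + D + C ≤ d (γ 0) (γ m) + C := le_of_mul_le_mul_left h3 (by linarith)
    have h5 := hd.tri (γ 0) (β q) (γ m)
    rw [h0, hβ 0 q, hd.symm (β q)] at h5
    rw [h0] at h4
    simp only [Nat.cast_zero, zero_sub, abs_neg, Nat.abs_cast] at h5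
    have h6 : (j : ℝ) ≤ q := by linarith
    exact_mod_cast h6
  obtain ⟨i, -, h⟩ := exists_near_of_crossing hd le_rfl (J := 2 * C) (by linarith)
    (hβ.qgOn le_rfl univ) (P := γ) (n := m) (D := D) (t₁ := 0) (t := j) (t₂ := q)
    (fun i _ => by
      have := (hγ i (mem_univ _) (i + 1) (mem_univ _)).2
      push_cast at this
      simp only [sub_add_cancel_left, abs_neg, abs_one] at this
      linarith)
    (fun i _ => (hnear i).imp fun j hj => ⟨mem_univ _, hj⟩)
    (mem_univ _) (mem_univ _) (mem_univ _) (Nat.zero_le _) hjq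
    (by rw [h0, hd.self]; exact hD0) hq
  exact ⟨i, by rwa [hd.symm]⟩

end Rays

/-! ### Boundaries: the inclusion map and its topological properties -/

section Boundary

variable {G : Type*} [Group G]

theorem mk_eq_iff {S : Set G} (hS : Subgroup.closure S = ⊤) {x y : GRay G S} :
    Quot.mk (grayRel S) x = Quot.mk (grayRel S) y ↔
      BddHD (wdist S) (range x.seq) (range y.seq) := by
  have hd := graphMetric_wdist hS
  have he : Equivalence (grayRel (G := G) S) :=
    ⟨fun x => BddHD.refl hd _, fun h => h.symm, fun h h' => h.trans hd h'⟩
  constructor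
  · intro h
    exact he.eqvGen_iff.1 (Quot.eqvGen_exact h)
  · intro h
    exact Quot.sound h

theorem NGRays.le_nhds_iff {S : Set G} {N : ℝ → ℝ} (f : Filter (NGRays G S N)) (x : NGRays G S N) :
    f ≤ 𝓝 x ↔ ∀ i, ∀ᶠ y in f, y.1.seq i = x.1.seq i := by
  let _ : TopologicalSpace G := ⊥
  have : DiscreteTopology G := ⟨rfl⟩
  have h1 : 𝓝 x = comap (fun γ : NGRays G S N => γ.1.seq) (𝓝 x.1.seq) := nhds_induced _ _
  rw [h1, ← tendsto_iff_comap, tendsto_pi_nhds]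
  simp only [nhds_discrete, tendsto_pure]

theorem isClosed_iff_strata {S : Set G} {A : Set (MorseBoundary G S)} :
    IsClosed A ↔ ∀ N, IsClosed {γ : NGRays G S N | Quot.mk (grayRel S) γ.1 ∈ A} := by
  refine (isClosed_iSup_iff).trans (forall_congr' fun N => ?_)
  exact isClosed_coinduced

/-- Closedness is tested on pointwise limits, along ultrafilters, of rays of one stratum. -/
theorem isClosed_of_limits {S : Set G} {A : Set (MorseBoundary G S)}
    (h : ∀ N (ω : Ultrafilter (NGRays G S N)) (x : NGRays G S N),
      (∀ i, ∀ᶠ y in (ω : Filter (NGRays G S N)), y.1.seq i = x.1.seq i) →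
      (∀ᶠ y in (ω : Filter (NGRays G S N)), Quot.mk (grayRel S) y.1 ∈ A) →
      Quot.mk (grayRel S) x.1 ∈ A) : IsClosed A :=
  isClosed_iff_strata.2 fun N => isClosed_iff_ultrafilter.2 fun x ω hω hA =>
    h N ω x ((NGRays.le_nhds_iff _ _).1 hω) hA

theorem mem_of_limit {S : Set G} {A : Set (MorseBoundary G S)} (hA : IsClosed A) {N : ℝ → ℝ}
    {J : Type*} (ω : Ultrafilter J) {b : J → GRay G S} {x : GRay G S}
    (hb : ∀ᶠ k in (ω : Filter J), MorseSet (wdist S) N (range (b k).seq))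
    (hx : MorseSet (wdist S) N (range x.seq))
    (hlim : ∀ i, ∀ᶠ k in (ω : Filter J), (b k).seq i = x.seq i)
    (hmem : ∀ᶠ k in (ω : Filter J), Quot.mk (grayRel S) (b k) ∈ A) :
    Quot.mk (grayRel S) x ∈ A := by
  classical
  set x' : NGRays G S N := ⟨x, hx⟩ with hx'
  set f : J → NGRays G S N := fun k =>
    if h : MorseSet (wdist S) N (range (b k).seq) then ⟨b k, h⟩ else x' with hf
  have hfk : ∀ᶠ k in (ω : Filter J), (f k).1 = b k := by
    filter_upwards [hb] with k hk
    simp [hf, hk]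
  refine isClosed_iff_ultrafilter.1 (isClosed_iff_strata.1 hA N) x' (ω.map f) ?_ ?_
  · rw [NGRays.le_nhds_iff]
    intro i
    rw [Ultrafilter.coe_map, eventually_map]
    filter_upwards [hfk, hlim i] with k h1 h2
    rw [h1, h2]
  · change ∀ᶠ k in (ω : Filter J), Quot.mk (grayRel S) (f k).1 ∈ A
    filter_upwards [hfk, hmem] with k h1 h2
    rwa [h1]

variable {S : Finset G} {H : Subgroup G} {TH : Finset H} {C : ℕ}

/-- The inclusion of the Morse boundary of an undistorted subgroup `H`, all of whose Morse rays
are Morse in `G` with uniform control. -/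
structure Setup (S : Finset G) (H : Subgroup G) (TH : Finset H) (C : ℕ) : Prop where
  gen : Subgroup.closure (S : Set G) = ⊤
  genH : Subgroup.closure (TH : Set H) = ⊤
  one_le : 1 ≤ C
  lower : ∀ v w : H, wdist (TH : Set H) v w ≤ C * wdist (S : Set G) (v : G) (w : G)
  upper : ∀ v w : H, wdist (S : Set G) (v : G) (w : G) ≤ C * wdist (TH : Set H) v w
  morse : ∀ N : ℝ → ℝ, ∃ N' : ℝ → ℝ, ∀ γ : ℕ → H, IsGeodSeq (wdist (TH : Set H)) γ →
    MorseSet (wdist (TH : Set H)) N (range γ) →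
    MorseSet (wdist (S : Set G)) N' (range fun n => (γ n : G))

namespace Setup

theorem one_le_cast (h : Setup S H TH C) : (1 : ℝ) ≤ C := by exact_mod_cast h.one_le

theorem qgOn (h : Setup S H TH C) {γ : ℕ → H} (hγ : IsGeodSeq (wdist (TH : Set H)) γ) :
    QGOn (wdist (S : Set G)) C univ fun n => (γ n : G) := by
  have hC := h.one_le_cast
  intro i _ j _
  have h1 := h.lower (γ i) (γ j)
  have h2 := h.upper (γ i) (γ j)
  rw [hγ] at h1 h2
  refine ⟨?_, by linarith⟩
  have : |(i : ℝ) - j| / C ≤ wdist (S : Set G) (γ i : G) (γ j : G) := by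
    rw [div_le_iff₀ (by linarith)]; linarith
  linarith

theorem bddHD_iff (h : Setup S H TH C) {x y : ℕ → H} :
    BddHD (wdist (TH : Set H)) (range x) (range y) ↔
      BddHD (wdist (S : Set G)) (range fun n => (x n : G)) (range fun n => (y n : G)) := by
  constructor
  · intro hb
    obtain ⟨κ, h1, h2⟩ := hb.close
    refine Close.bddHD (κ := C * κ) ⟨fun i => (h1 i).imp fun j hj => ?_,
      fun i => (h2 i).imp fun j hj => ?_⟩
    · exact (h.upper _ _).trans (by gcongr)
    · exact (h.upper _ _).trans (by gcongr)
  · intro hb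
    obtain ⟨κ, h1, h2⟩ := hb.close
    refine Close.bddHD (κ := C * κ) ⟨fun i => (h1 i).imp fun j hj => ?_,
      fun i => (h2 i).imp fun j hj => ?_⟩
    · exact (h.lower _ _).trans (by gcongr)
    · exact (h.lower _ _).trans (by gcongr)

/-- Rays of `H` which are Morse in `G` are Morse in `H`, with control of the gauge. -/
theorem morseSet_restrict (h : Setup S H TH C) {N : ℝ → ℝ} {γ : ℕ → H}
    (hm : MorseSet (wdist (S : Set G)) N (range fun n => (γ n : G))) :
    MorseSet (wdist (TH : Set H)) (fun c => C * N (C * c)) (range γ) := by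
  have hC := h.one_le_cast
  rintro c hc a b hab α hα ⟨i, hi⟩ ⟨j, hj⟩ t ht
  have hcC : c ≤ C * c := by nlinarith
  have hQ : IsQG (wdist (S : Set G)) (C * c) (Icc a b) fun t => (α t : G) := by
    refine ⟨by nlinarith, fun s hs t ht => ?_⟩
    obtain ⟨h1, h2⟩ := hα.2 s hs t ht
    have h3 := h.lower (α s) (α t)
    have h4 := h.upper (α s) (α t)
    constructor
    · have e : |s - t| / (C * c) = |s - t| / c / C := by rw [mul_comm, div_div]
      have h5 : |s - t| / c ≤ C * (wdist (S : Set G) (α s : G) (α t : G) + C * c) := by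
        have : c ≤ C * (C * c) := by nlinarith
        linarith
      rw [e, sub_le_iff_le_add, div_le_iff₀ (by linarith)]
      linarith
    · have h5 : C * wdist (TH : Set H) (α s) (α t) ≤ C * (c * |s - t| + c) := by gcongr
      linarith
  obtain ⟨_, ⟨l, rfl⟩, hl⟩ := hm (C * c) (by nlinarith) a b hab _ hQ ⟨i, by simp [hi]⟩
    ⟨j, by simp [hj]⟩ t ht
  exact ⟨_, ⟨l, rfl⟩, (h.lower _ _).trans (mul_le_mul_of_nonneg_left hl (by linarith))⟩

theorem finite_ball (h : Setup S H TH C) (x : G) (n : ℕ) :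
    {y | wdist (S : Set G) x y ≤ n}.Finite :=
  wdist_ball_finite h.gen S.finite_toSet x n

/-- Each Morse ray of `H` is close to a Morse geodesic ray of `G`, uniformly on strata. -/
theorem exists_ray (h : Setup S H TH C) (N : ℝ → ℝ) :
    ∃ (N' : ℝ → ℝ) (κ : ℝ), ∀ x : GRay H (TH : Set H), MorseSet (wdist (TH : Set H)) N (range x.seq) →
      ∃ β : GRay G (S : Set G), MorseSet (wdist (S : Set G)) N' (range β.seq) ∧
        Close (wdist (S : Set G)) κ (fun n => (x.seq n : G)) β.seq := by
  have hd := graphMetric_wdist h.gen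
  obtain ⟨N₁, hN₁⟩ := h.morse N
  obtain ⟨κ, hκ, hclose⟩ := exists_geodesic_close hd h.finite_ball h.one_le_cast N₁
  refine ⟨fun c => N₁ (c + 2 * κ) + 2 * κ, κ, fun x hx => ?_⟩
  have hm := hN₁ _ x.geod hx
  obtain ⟨β, β0, hβ, hc⟩ := hclose _ (h.qgOn x.geod) hm
  have hβm := MorseSet.of_close hd hκ hc hm
  exact ⟨⟨β, by rw [β0, x.base]; rfl, hβ, _, hβm⟩, hβm, hc⟩

theorem map_eq (h : Setup S H TH C) {F : MorseBoundary H (TH : Set H) → MorseBoundary G (S : Set G)}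
    (hF : InclSpec (S : Set G) H (TH : Set H) F) {x : GRay H (TH : Set H)} {β : GRay G (S : Set G)}
    (hb : BddHD (wdist (S : Set G)) (range fun n => (x.seq n : G)) (range β.seq)) :
    F (Quot.mk _ x) = Quot.mk _ β := by
  obtain ⟨β', hβ'⟩ := Quot.exists_rep (F (Quot.mk _ x))
  exact hβ'.symm.trans ((mk_eq_iff h.gen).2 ((hF x β' hβ').symm.trans (graphMetric_wdist h.gen) hb))

theorem exists_inclSpec (h : Setup S H TH C) :
    ∃ F : MorseBoundary H (TH : Set H) → MorseBoundary G (S : Set G),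
      InclSpec (S : Set G) H (TH : Set H) F := by
  have hd := graphMetric_wdist h.gen
  have hex : ∀ x : GRay H (TH : Set H), ∃ β : GRay G (S : Set G),
      BddHD (wdist (S : Set G)) (range fun n => (x.seq n : G)) (range β.seq) := by
    intro x
    obtain ⟨N, hN⟩ := x.morse
    obtain ⟨N', κ, hκ⟩ := h.exists_ray N
    obtain ⟨β, -, hβ⟩ := hκ x hN
    exact ⟨β, hβ.bddHD⟩
  choose f hf using hex
  refine ⟨Quot.lift (fun x => Quot.mk _ (f x)) fun x y hxy => ?_, fun x β hβ => ?_⟩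
  · exact (mk_eq_iff h.gen).2 (((hf x).symm.trans hd (h.bddHD_iff.1 hxy)).trans hd (hf y))
  · exact (hf x).trans hd ((mk_eq_iff h.gen).1 hβ).symm

theorem relBdryIn_eq (h : Setup S H TH C) :
    relBdryIn (S : Set G) H (TH : Set H) = univ := by
  refine eq_univ_of_forall fun ξ => ?_
  obtain ⟨x, rfl⟩ := Quot.exists_rep ξ
  obtain ⟨N, hN⟩ := x.morse
  obtain ⟨N', hN'⟩ := h.morse N
  exact ⟨x, rfl, N', hN' _ x.geod hN⟩

theorem injective (h : Setup S H TH C)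
    {F : MorseBoundary H (TH : Set H) → MorseBoundary G (S : Set G)}
    (hF : InclSpec (S : Set G) H (TH : Set H) F) : Function.Injective F := by
  intro ξ η hξη
  obtain ⟨x, rfl⟩ := Quot.exists_rep ξ
  obtain ⟨y, rfl⟩ := Quot.exists_rep η
  obtain ⟨β, hβ⟩ := Quot.exists_rep (F (Quot.mk _ x))
  refine (mk_eq_iff h.genH).2 (h.bddHD_iff.2 ?_)
  exact (hF x β hβ).trans (graphMetric_wdist h.gen) (hF y β (hβ.trans hξη)).symm

theorem continuous (h : Setup S H TH C)
    {F : MorseBoundary H (TH : Set H) → MorseBoundary G (S : Set G)}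
    (hF : InclSpec (S : Set G) H (TH : Set H) F) : Continuous F := by
  have hd := graphMetric_wdist h.gen
  refine continuous_iff_isClosed.2 fun K hK => isClosed_of_limits fun N ω x hlim hmem => ?_
  obtain ⟨N', κ, hκ⟩ := h.exists_ray N
  choose b hbm hbc using fun y : NGRays H (TH : Set H) N => hκ y.1 y.2
  obtain ⟨β, β0, hβ, hβlim⟩ := exists_limit h.finite_ball ω (fun y => (b y).base)
    (fun i j => Eventually.of_forall fun y => (b y).geod i j)
  have hβm : MorseSet (wdist (S : Set G)) N' (range β) :=
    MorseSet.limit hd ω (fun y => (b y).base) (Eventually.of_forall fun y => (b y).geod)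
      (Eventually.of_forall hbm) hβlim
  set β' : GRay G (S : Set G) := ⟨β, β0, hβ, _, hβm⟩ with hβ'
  have hclose : Close (wdist (S : Set G)) κ (fun n => (x.1.seq n : G)) β :=
    Close.limit hd ω h.one_le_cast (b := fun (y : NGRays H (TH : Set H) N) n => (y.1.seq n : G))
      (o := 1) (fun y => by rw [y.1.base]; rfl) (fun y => (b y).base)
      (Eventually.of_forall fun y => h.qgOn y.1.geod)
      (Eventually.of_forall fun y => (b y).geod.qgOn h.one_le_cast _)
      (Eventually.of_forall hbc)
      (fun i => by filter_upwards [hlim i] with y hy using by rw [hy]) hβlim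
  refine (congrArg (· ∈ K) (h.map_eq hF (β := β') hclose.bddHD)).mpr ?_
  refine mem_of_limit hK ω (Eventually.of_forall hbm) hβm hβlim ?_
  filter_upwards [hmem] with y hy
  exact (congrArg (· ∈ K) (h.map_eq hF (hbc y).bddHD)).mp hy

theorem isClosedMap (h : Setup S H TH C)
    {F : MorseBoundary H (TH : Set H) → MorseBoundary G (S : Set G)}
    (hF : InclSpec (S : Set G) H (TH : Set H) F) : IsClosedMap F := by
  classical
  have hd := graphMetric_wdist h.gen
  have hdH := graphMetric_wdist h.genH
  intro A hA
  refine isClosed_of_limits fun N ω x hlim hmem => ?_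
  obtain ⟨κ, hκ0, hκ⟩ := exists_close_of_bddHD hd h.one_le_cast N
  -- preimages in `H` of almost all rays of the family; the other values are irrelevant
  obtain ⟨y₀, hy₀⟩ := hmem.exists
  obtain ⟨ξ₀, -, -⟩ := hy₀
  obtain ⟨c₀, -⟩ := Quot.exists_rep ξ₀
  have hex : ∀ y : NGRays G (S : Set G) N, ∃ c : GRay H (TH : Set H),
      Quot.mk (grayRel (S : Set G)) y.1 ∈ image F A →
        Quot.mk (grayRel (TH : Set H)) c ∈ A ∧
        BddHD (wdist (S : Set G)) (range fun n => (c.seq n : G)) (range y.1.seq) := by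
    intro y
    by_cases hy : Quot.mk (grayRel (S : Set G)) y.1 ∈ image F A
    · obtain ⟨ξ, hξ, hξy⟩ := hy
      obtain ⟨c, rfl⟩ := Quot.exists_rep ξ
      exact ⟨c, fun _ => ⟨hξ, hF c y.1 hξy.symm⟩⟩
    · exact ⟨c₀, fun hy' => absurd hy' hy⟩
  choose c hc using hex
  have hclose : ∀ᶠ y in (ω : Filter (NGRays G (S : Set G) N)),
      Close (wdist (S : Set G)) κ (fun n => ((c y).seq n : G)) y.1.seq := by
    filter_upwards [hmem] with y hy
    exact hκ _ _ (h.qgOn (c y).geod) y.1.geod (by rw [(c y).base, y.1.base]; rfl) y.2 (hc y hy).2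
  set N' : ℝ → ℝ := fun e => C * (N (C * e + 2 * κ) + 2 * κ) with hN'
  have hcm : ∀ᶠ y in (ω : Filter (NGRays G (S : Set G) N)),
      MorseSet (wdist (TH : Set H)) N' (range (c y).seq) := by
    filter_upwards [hclose] with y hy
    exact h.morseSet_restrict (MorseSet.of_close hd hκ0 hy.symm y.2)
  obtain ⟨γ, γ0, hγ, hγlim⟩ := exists_limit (wdist_ball_finite h.genH TH.finite_toSet) ω
    (fun y => (c y).base) (fun i j => Eventually.of_forall fun y => (c y).geod i j)
  have hγm : MorseSet (wdist (TH : Set H)) N' (range γ) :=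
    MorseSet.limit hdH ω (fun y => (c y).base) (Eventually.of_forall fun y => (c y).geod) hcm hγlim
  set γ' : GRay H (TH : Set H) := ⟨γ, γ0, hγ, _, hγm⟩ with hγ'
  have hγx : Close (wdist (S : Set G)) κ (fun n => (γ n : G)) x.1.seq :=
    Close.limit hd ω h.one_le_cast (b := fun y n => ((c y).seq n : G)) (o := 1)
      (fun y => by rw [(c y).base]; rfl) (fun y => y.1.base)
      (Eventually.of_forall fun y => h.qgOn (c y).geod)
      (Eventually.of_forall fun y => y.1.geod.qgOn h.one_le_cast _) hclose
      (fun i => by filter_upwards [hγlim i] with y hy using by rw [hy]) hlim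
  refine ⟨Quot.mk _ γ', mem_of_limit hA ω hcm hγm hγlim ?_, h.map_eq hF hγx.bddHD⟩
  filter_upwards [hmem] with y hy using (hc y hy).1

theorem isEmbedding (h : Setup S H TH C)
    {F : MorseBoundary H (TH : Set H) → MorseBoundary G (S : Set G)}
    (hF : InclSpec (S : Set G) H (TH : Set H) F) : IsEmbedding F :=
  (IsClosedEmbedding.of_continuous_injective_isClosedMap (h.continuous hF) (h.injective hF)
    (h.isClosedMap hF)).isEmbedding

end Setup

end Boundary

/-- **Theorem B** (Statement 2).  Let `G` split as a graph of groups and let `V` be a vertex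
group such that all incident edge groups are finitely generated, undistorted in `G` and
relatively wide in `V`.  Then (1) `V` is (finitely generated and) undistorted in `G` and
`(∂_M V, G) = ∂_M V`; and (2) the natural inclusion `∂_M V ↪ ∂_M G` exists and is a
topological embedding. -/
theorem morse_boundary_vertex_group_embeds
    {G VT : Type*} [Group G] [MulAction G VT]
    (S : Finset G) (hSgen : Subgroup.closure (S : Set G) = ⊤)
    (T : SimpleGraph VT) (hact : ActsOnTree G T) (p : VT)
    (hedge : ∀ b : VT, T.Adj p b →
      FGUndistorted (S : Set G) (edgeStab G p b) ∧
      RelWideIn (MulAction.stabilizer G p) (edgeStab G p b)) :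
    FGUndistorted (S : Set G) (MulAction.stabilizer G p) ∧
    ∀ TV : Finset (MulAction.stabilizer G p),
      Subgroup.closure (TV : Set (MulAction.stabilizer G p)) = ⊤ →
      relBdryIn (S : Set G) (MulAction.stabilizer G p)
          (TV : Set (MulAction.stabilizer G p)) = Set.univ ∧
      (∃ F : MorseBoundary (MulAction.stabilizer G p)
            (TV : Set (MulAction.stabilizer G p)) → MorseBoundary G (S : Set G),
        InclSpec (S : Set G) (MulAction.stabilizer G p)
          (TV : Set (MulAction.stabilizer G p)) F) ∧
      (∀ F : MorseBoundary (MulAction.stabilizer G p)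
            (TV : Set (MulAction.stabilizer G p)) → MorseBoundary G (S : Set G),
        InclSpec (S : Set G) (MulAction.stabilizer G p)
          (TV : Set (MulAction.stabilizer G p)) F →
        IsEmbedding F) := by
  obtain ⟨B, hs, P, R, hB, hsplit⟩ := exists_splitting S hSgen T hact p
  obtain ⟨T₀, hT₀, C₀, hC₀⟩ := hsplit.undistorted hSgen (fun b => inf_le_left)
    (fun b => (hedge b (hB b b.2)).1)
  refine ⟨?_, fun TV hTV => ?_⟩
  · obtain ⟨C₁, hC₁⟩ := exists_wdist_le_of_subgroup hSgen T₀ hT₀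
    have hd := graphMetric_wdist hSgen
    have hdV := graphMetric_wdist hT₀
    refine ⟨T₀, hT₀, 1 + C₀ + C₁, by
      have h0 : (0 : ℝ) ≤ C₀ := by positivity
      have h1 : (0 : ℝ) ≤ C₁ := by positivity
      linarith, fun v w => ⟨?_, ?_⟩⟩
    · have h1 := hC₀ v w
      have h2 := hd.nonneg (v : G) (w : G)
      have : (0 : ℝ) ≤ (1 + C₁) * wdist (S : Set G) (v : G) (w : G) + (1 + C₀ + C₁) := by positivity
      linarith
    · have h1 := hC₁ v w
      have h2 := hdV.nonneg v w
      have : (0 : ℝ) ≤ (1 + C₀) * wdist (T₀ : Set _) v w + (1 + C₀ + C₁) := by positivity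
      linarith
  · obtain ⟨C₁, hC₁⟩ := exists_wdist_le_of_subgroup hSgen TV hTV
    obtain ⟨C₂, hC₂⟩ := exists_wdist_le_of_generating hT₀ hC₀ hTV
    have hd := graphMetric_wdist hSgen
    have hdV := graphMetric_wdist hTV
    have lower : ∀ v w : MulAction.stabilizer G p, wdist (TV : Set (MulAction.stabilizer G p)) v w ≤
        ((1 + C₁ + C₂ : ℕ) : ℝ) * wdist (S : Set G) (v : G) (w : G) := fun v w => by
      refine (hC₂ v w).trans (mul_le_mul_of_nonneg_right ?_ (hd.nonneg _ _))
      exact_mod_cast (by omega : C₂ ≤ 1 + C₁ + C₂)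
    have upper : ∀ v w : MulAction.stabilizer G p, wdist (S : Set G) (v : G) (w : G) ≤
        ((1 + C₁ + C₂ : ℕ) : ℝ) * wdist (TV : Set (MulAction.stabilizer G p)) v w := fun v w => by
      refine (hC₁ v w).trans (mul_le_mul_of_nonneg_right ?_ (hdV.nonneg _ _))
      exact_mod_cast (by omega : C₁ ≤ 1 + C₁ + C₂)
    have hset : Setup S (MulAction.stabilizer G p) TV (1 + C₁ + C₂) :=
      ⟨hSgen, hTV, by omega, lower, upper, hsplit.exists_morse hSgen hTV (by omega) lower upper
        fun b => (hedge b (hB b b.2)).2 TV hTV⟩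
    exact ⟨hset.relBdryIn_eq, hset.exists_inclSpec, fun F hF => hset.isEmbedding hF⟩

end MorseGoG
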